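/- arXiv:2209.11319 — 3 statements merged into one kernel-verified Lean document; each statement's English description precedes it below -/
import Mathlib

section
/- For a fixed perfect matching M in K_{2m,2m,2m}, the number of perfect matchings avoiding M equals the sum over 0 ≤ i,j,k ≤ m of (-1)^{i+j+k} C(m,i)C(m,j)C(m,k) C(2m-i-j, m-i) C(2m-j-k, m-j) C(2m-k-i, m-k) (m-i)!(m-j)!(m-k)!. -/
open Nat SimpleGraph Finset

/-- The number of perfect matchings of a graph `G`. -/
noncomputable def pmCount {V : Type} (G : SimpleGraph V) : ℕ :=
  {M : G.Subgraph | M.IsPerfectMatching}.ncard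

section

lemma disjoint_filter_add_one_add_two {V : Type*} (c : V → Fin 3) (W : Finset V) (x : Fin 3) :
    Disjoint {u ∈ W | c u = x + 1} {u ∈ W | c u = x + 2} := by
  have key : ∀ b : Fin 3, b + 1 ≠ b + 2 := by decide
  refine disjoint_filter.2 fun u _ h1 h2 => key x (h1.symm.trans h2)

variable {V : Type} [DecidableEq V]

lemma card_filter_erase_erase {c : V → Fin 3} {W : Finset V} {v w : V}
    (hv : v ∈ W) (hw : w ∈ W) (hvw : v ≠ w) (x : Fin 3) :
    #{u ∈ (W.erase v).erase w | c u = x} + (if c v = x then 1 else 0) +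
      (if c w = x then 1 else 0) = #{u ∈ W | c u = x} := by
  have hw' : w ∈ W.erase v := mem_erase.2 ⟨hvw.symm, hw⟩
  simp only [card_filter]
  rw [← add_sum_erase W _ hv, ← add_sum_erase _ _ hw']
  ring

lemma filter_ne_eq_union (c : V → Fin 3) (W : Finset V) (x : Fin 3) :
    {u ∈ W | c u ≠ x} = {u ∈ W | c u = x + 1} ∪ {u ∈ W | c u = x + 2} := by
  have key : ∀ a b : Fin 3, a ≠ b ↔ a = b + 1 ∨ a = b + 2 := by decide
  ext u
  simp only [mem_filter, mem_union, key]
  tauto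

lemma sum_powerset_union {s t : Finset V} (hst : Disjoint s t) (F : Finset V → ℤ) :
    ∑ u ∈ (s ∪ t).powerset, F u = ∑ a ∈ s.powerset, ∑ b ∈ t.powerset, F (a ∪ b) := by
  rw [← sum_product']
  refine sum_nbij' (fun u => (u ∩ s, u ∩ t)) (fun a => a.1 ∪ a.2) ?_ ?_ ?_ ?_ ?_
  · intro u _; simp
  · rintro ⟨a, b⟩ h
    simp only [mem_product, mem_powerset] at h ⊢
    exact union_subset_union h.1 h.2
  · intro u hu
    rw [mem_powerset] at hu
    simp only
    rw [← inter_union_distrib_left, inter_eq_left.2 hu]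
  · rintro ⟨a, b⟩ h
    simp only [mem_product, mem_powerset] at h
    have h1 : b ∩ s = ∅ := disjoint_iff_inter_eq_empty.1 (hst.symm.mono_left h.2)
    have h2 : a ∩ t = ∅ := disjoint_iff_inter_eq_empty.1 (hst.mono_left h.1)
    simp [union_inter_distrib_right, h1, h2, inter_eq_left.2 h.1, inter_eq_left.2 h.2]
  · intro u hu
    rw [mem_powerset] at hu
    simp only
    rw [← inter_union_distrib_left, inter_eq_left.2 hu]

variable [Fintype V]

/-- The functions that restrict to a properly coloured fixed-point-free involution of `W`
and agree with `h` outside `W`. -/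
def colorMatchings (c : V → Fin 3) (W : Finset V) (h : V → V) : Finset (V → V) :=
  {f | (∀ v ∈ W, f v ∈ W ∧ f (f v) = v ∧ c (f v) ≠ c v) ∧ ∀ v ∉ W, f v = h v}

lemma mem_colorMatchings {c : V → Fin 3} {W : Finset V} {h f : V → V} :
    f ∈ colorMatchings c W h ↔
      (∀ v ∈ W, f v ∈ W ∧ f (f v) = v ∧ c (f v) ≠ c v) ∧ ∀ v ∉ W, f v = h v := by
  simp [colorMatchings]

lemma colorMatchings_filter_apply_eq {c : V → Fin 3} {W : Finset V} (h : V → V) {v w : V}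
    (hv : v ∈ W) (hw : w ∈ W) (hc : c w ≠ c v) :
    {f ∈ colorMatchings c W h | f v = w} =
      colorMatchings c ((W.erase v).erase w)
        (Function.update (Function.update h v w) w v) := by
  have hne : v ≠ w := by rintro rfl; exact hc rfl
  ext f
  simp only [mem_filter, mem_colorMatchings, mem_erase]
  constructor
  · rintro ⟨⟨h1, h2⟩, rfl⟩
    refine ⟨fun x hx => ⟨⟨?_, ?_, (h1 x hx.2.2).1⟩, (h1 x hx.2.2).2⟩, fun x hx => ?_⟩
    · intro he
      have := (h1 x hx.2.2).2.1
      rw [he, (h1 v hv).2.1] at this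
      exact hx.2.1 this.symm
    · intro he
      have := (h1 x hx.2.2).2.1
      rw [he] at this
      exact hx.1 this.symm
    · by_cases hxw : x = f v
      · subst hxw; simp [(h1 v hv).2.1]
      · by_cases hxv : x = v
        · subst hxv; simp [Function.update_of_ne hne]
        · rw [Function.update_of_ne hxw, Function.update_of_ne hxv]
          exact h2 x fun hxW => hx ⟨hxw, hxv, hxW⟩
  · rintro ⟨h1, h2⟩
    have hfv : f v = w := by simpa [Function.update_of_ne hne] using h2 v (by simp)
    have hfw : f w = v := by simpa using h2 w (by simp)
    refine ⟨⟨fun x hx => ?_, fun x hx => ?_⟩, hfv⟩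
    · by_cases hxw : x = w
      · subst hxw; rw [hfw, hfv]; exact ⟨hv, rfl, hc.symm⟩
      · by_cases hxv : x = v
        · subst hxv; rw [hfv, hfw]; exact ⟨hw, rfl, hc⟩
        · obtain ⟨h3, h4⟩ := h1 x ⟨hxw, hxv, hx⟩
          exact ⟨h3.2.2, h4⟩
    · have hxw : x ≠ w := by rintro rfl; exact hx hw
      have hxv : x ≠ v := by rintro rfl; exact hx hv
      rw [h2 x fun h => hx h.2.2, Function.update_of_ne hxw, Function.update_of_ne hxv]

lemma card_colorMatchings_eq_sum {c : V → Fin 3} {W : Finset V} (h : V → V) {v : V}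
    (hv : v ∈ W) :
    #(colorMatchings c W h) = ∑ w ∈ W with c w ≠ c v,
      #(colorMatchings c ((W.erase v).erase w)
        (Function.update (Function.update h v w) w v)) := by
  rw [card_eq_sum_card_fiberwise (f := fun f => f v) (t := {w ∈ W | c w ≠ c v})]
  · refine sum_congr rfl fun w hw => ?_
    rw [mem_filter] at hw
    rw [colorMatchings_filter_apply_eq h hv hw.1 hw.2]
  · intro f hf
    obtain ⟨h1, h2, h3⟩ := (mem_colorMatchings.1 hf).1 v hv
    simpa using ⟨h1, h3⟩

/-- No matching exists when one colour class is larger than the rest of `W`. -/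
lemma colorMatchings_eq_empty {c : V → Fin 3} {W : Finset V} (h : V → V) (x : Fin 3)
    (hx : #{v ∈ W | c v ≠ x} < #{v ∈ W | c v = x}) : colorMatchings c W h = ∅ := by
  refine eq_empty_of_forall_notMem fun f hf => hx.not_ge ?_
  obtain ⟨h1, -⟩ := mem_colorMatchings.1 hf
  refine card_le_card_of_injOn f (fun v hv => ?_) fun v hv w hw hvw => ?_
  · simp only [coe_filter, Set.mem_ofPred_eq] at hv ⊢
    exact ⟨(h1 v hv.1).1, hv.2 ▸ (h1 v hv.1).2.2⟩
  · simp only [coe_filter, Set.mem_ofPred_eq] at hv hw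
    rw [← (h1 v hv.1).2.1, hvw, (h1 w hw.1).2.1]

lemma factorial_mul_card_colorMatchings (c : V → Fin 3) (n : ℕ) :
    ∀ (p q r : ℕ) (x : Fin 3) (W : Finset V) (h : V → V), p + q + r = n →
      #{v ∈ W | c v = x} = p + r → #{v ∈ W | c v = x + 1} = p + q →
      #{v ∈ W | c v = x + 2} = q + r →
      p ! * q ! * r ! * #(colorMatchings c W h) = (p + r)! * (p + q)! * (q + r)! := by
  have e1 : ∀ x : Fin 3, x ≠ x + 1 := by decide
  have e2 : ∀ x : Fin 3, x ≠ x + 2 := by decide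
  have e3 : ∀ x : Fin 3, x + 1 ≠ x + 2 := by decide
  have e4 : ∀ x : Fin 3, x + 1 + 1 = x + 2 := by decide
  have e5 : ∀ x : Fin 3, x + 1 + 2 = x := by decide
  induction n with
  | zero =>
    intro p q r x W h hn h0 h1 h2
    obtain ⟨rfl, rfl, rfl⟩ : p = 0 ∧ q = 0 ∧ r = 0 := by omega
    have hW : W = ∅ := by
      rw [← filter_union_filter_not_eq (fun v => c v = x) W, filter_ne_eq_union c W x]
      simp_all
    subst hW
    have : colorMatchings c ∅ h = {h} := by
      ext f
      simp [mem_colorMatchings, funext_iff]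
    simp [this]
  | succ n ih =>
    have main : ∀ (p q r : ℕ) (x : Fin 3) (W : Finset V) (h : V → V), p + q + r = n + 1 →
      #{v ∈ W | c v = x} = p + r → #{v ∈ W | c v = x + 1} = p + q →
      #{v ∈ W | c v = x + 2} = q + r → 0 < p + r →
      p ! * q ! * r ! * #(colorMatchings c W h) = (p + r)! * (p + q)! * (q + r)! := by
      intro p q r x W h hn h0 h1 h2 hpos
      obtain ⟨v, hv⟩ := card_pos.1 (h0 ▸ hpos)
      obtain ⟨hvW, rfl⟩ := mem_filter.1 hv
      rw [card_colorMatchings_eq_sum h hvW, filter_ne_eq_union,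
        sum_union (disjoint_filter_add_one_add_two c W _), mul_add, mul_sum, mul_sum]
      have hB : ∀ w ∈ ({w ∈ W | c w = c v + 1} : Finset V), p ! * q ! * r ! *
          #(colorMatchings c ((W.erase v).erase w)
            (Function.update (Function.update h v w) w v)) =
          p * ((p + r - 1)! * (p + q - 1)! * (q + r)!) := by
        intro w hw
        obtain ⟨hwW, hcw⟩ := mem_filter.1 hw
        have hvw : v ≠ w := by rintro rfl; exact e1 _ hcw
        have k0 := card_filter_erase_erase (c := c) hvW hwW hvw (c v)
        have k1 := card_filter_erase_erase (c := c) hvW hwW hvw (c v + 1)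
        have k2 := card_filter_erase_erase (c := c) hvW hwW hvw (c v + 2)
        simp only [hcw, e1, e2, e3, (e1 _).symm, if_true, if_false] at k0 k1 k2
        rcases p with _ | p
        · rw [colorMatchings_eq_empty _ (c v + 2)]
          · simp
          · have := filter_ne_eq_union c ((W.erase v).erase w) (c v + 2)
            have e6 : ∀ x : Fin 3, x + 2 + 1 = x := by decide
            have e7 : ∀ x : Fin 3, x + 2 + 2 = x + 1 := by decide
            rw [e6, e7] at this
            rw [this]
            refine (card_union_le _ _).trans_lt ?_
            omega
        · have := ih p q r (c v) ((W.erase v).erase w)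
            (Function.update (Function.update h v w) w v) (by omega) (by omega) (by omega)
            (by omega)
          rw [show p + 1 + r - 1 = p + r by omega, show p + 1 + q - 1 = p + q by omega, ← this,
            Nat.factorial_succ]
          ring
      have hC : ∀ w ∈ ({w ∈ W | c w = c v + 2} : Finset V), p ! * q ! * r ! *
          #(colorMatchings c ((W.erase v).erase w)
            (Function.update (Function.update h v w) w v)) =
          r * ((p + r - 1)! * (p + q)! * (q + r - 1)!) := by
        intro w hw
        obtain ⟨hwW, hcw⟩ := mem_filter.1 hw
        have hvw : v ≠ w := by rintro rfl; exact e2 _ hcw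
        have k0 := card_filter_erase_erase (c := c) hvW hwW hvw (c v)
        have k1 := card_filter_erase_erase (c := c) hvW hwW hvw (c v + 1)
        have k2 := card_filter_erase_erase (c := c) hvW hwW hvw (c v + 2)
        simp only [hcw, e1, e2, (e3 _).symm, (e2 _).symm, if_true, if_false] at k0 k1 k2
        rcases r with _ | r
        · rw [colorMatchings_eq_empty _ (c v + 1)]
          · simp
          · have := filter_ne_eq_union c ((W.erase v).erase w) (c v + 1)
            rw [e4, e5] at this
            rw [this]
            refine (card_union_le _ _).trans_lt ?_
            omega
        · have := ih p q r (c v) ((W.erase v).erase w)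
            (Function.update (Function.update h v w) w v) (by omega) (by omega) (by omega)
            (by omega)
          rw [show p + (r + 1) - 1 = p + r by omega, show q + (r + 1) - 1 = q + r by omega,
            ← this, Nat.factorial_succ]
          ring
      rw [sum_congr rfl hB, sum_congr rfl hC, sum_const, sum_const, h1, h2, smul_eq_mul,
        smul_eq_mul, ← Nat.mul_factorial_pred hpos.ne']
      rcases Nat.eq_zero_or_pos p with rfl | hp <;> rcases Nat.eq_zero_or_pos r with rfl | hr
      · omega
      · rw [← Nat.mul_factorial_pred (n := q + r) (by omega)]
        ring
      · rw [← Nat.mul_factorial_pred (n := p + q) (by omega)]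
        ring
      · rw [← Nat.mul_factorial_pred (n := q + r) (by omega),
          ← Nat.mul_factorial_pred (n := p + q) (by omega)]
        ring
    intro p q r x W h hn h0 h1 h2
    rcases Nat.eq_zero_or_pos (p + r) with hz | hpos
    · have := main q r p (x + 1) W h (by omega) (by omega) (by rw [e4]; omega)
        (by rw [e5]; omega) (by omega)
      calc _ = q ! * r ! * p ! * #(colorMatchings c W h) := by ring
        _ = _ := this
        _ = _ := by rw [add_comm q p, add_comm r p]; ring
    · exact main p q r x W h hn h0 h1 h2 hpos

lemma card_colorMatchings (c : V → Fin 3) (p q r : ℕ) (W : Finset V) (h : V → V)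
    (h0 : #{v ∈ W | c v = 0} = p + r) (h1 : #{v ∈ W | c v = 1} = p + q)
    (h2 : #{v ∈ W | c v = 2} = q + r) :
    #(colorMatchings c W h) =
      (p + q).choose p * (q + r).choose q * (r + p).choose r * p ! * q ! * r ! := by
  have := factorial_mul_card_colorMatchings c _ p q r 0 W h rfl h0 h1 h2
  refine Nat.eq_of_mul_eq_mul_left (by positivity : 0 < p ! * q ! * r !) (this.trans ?_)
  have key (a b : ℕ) : (a + b)! = (a + b).choose a * a ! * b ! := by
    rw [Nat.choose_symm_add, Nat.add_choose_mul_factorial_mul_factorial]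
  rw [add_comm p r, key p q, key q r, key r p]
  ring

/-- The perfect matchings of a graph correspond to the involutions moving every vertex
to a neighbour. -/
lemma pmCount_eq_card (G : SimpleGraph V) [DecidableRel G.Adj] :
    pmCount G = #{f : V → V | ∀ v, f (f v) = v ∧ G.Adj v (f v)} := by
  rw [pmCount, ← Set.ncard_coe_finset]
  symm
  refine Set.ncard_congr (fun f hf =>
    { verts := Set.univ
      Adj := fun v w => f v = w
      adj_sub := ?_
      edge_vert := fun _ => Set.mem_univ _
      symm := ?_ }) ?_ ?_ ?_
  · simp only [coe_filter, mem_univ, true_and, Set.mem_ofPred_eq] at hf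
    rintro v w rfl
    exact (hf v).2
  · simp only [coe_filter, mem_univ, true_and, Set.mem_ofPred_eq] at hf
    refine ⟨?_⟩
    rintro v w rfl
    exact (hf v).1
  · intro f hf
    rw [Set.mem_ofPred_eq, Subgraph.isPerfectMatching_iff]
    exact fun v => ⟨f v, rfl, fun w hw => Eq.symm hw⟩
  · intro f g hf hg hfg
    funext v
    have := congrArg (fun H : G.Subgraph => H.Adj v (g v)) hfg
    simpa using this
  · intro M hM
    rw [Set.mem_ofPred_eq, Subgraph.isPerfectMatching_iff] at hM
    choose f hf hf' using hM
    refine ⟨f, ?_, ?_⟩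
    · simp only [coe_filter, mem_univ, true_and, Set.mem_ofPred_eq]
      exact fun v => ⟨(hf' _ _ (hf v).symm).symm, (hf v).adj_sub⟩
    · ext v w
      · simpa using M.edge_vert (hf v)
      · exact ⟨fun h => h ▸ hf v, fun h => (hf' _ _ h).symm⟩

lemma card_filter_involution_eq {c : V → Fin 3} {m : ℕ} {g : V → V}
    (hc : ∀ x, #{v | c v = x} = 2 * m) (hg : ∀ v, g (g v) = v ∧ c (g v) ≠ c v) (x : Fin 3) :
    #{v | c v = x ∧ c (g v) = x + 1} = m := by
  have hswap : ∀ x y, #{v | c v = x ∧ c (g v) = y} = #{v | c v = y ∧ c (g v) = x} := by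
    intro x y
    refine card_nbij' g g ?_ ?_ ?_ ?_ <;> intro v <;> simp +contextual [(hg _).1]
  have hsplit : ∀ x, #{v | c v = x ∧ c (g v) = x + 1} + #{v | c v = x ∧ c (g v) = x + 2} =
      2 * m := by
    intro x
    rw [← hc x, ← card_union_of_disjoint]
    · have key : ∀ a b : Fin 3, a ≠ b ↔ a = b + 1 ∨ a = b + 2 := by decide
      congr 1
      ext v
      have := (key _ _).1 (hg v).2
      simp only [mem_union, mem_filter, mem_univ, true_and]
      constructor
      · tauto
      · rintro rfl; tauto
    · have key : ∀ b : Fin 3, b + 1 ≠ b + 2 := by decide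
      exact disjoint_filter.2 fun u _ h1 h2 => key x (h1.2.symm.trans h2.2)
  have h0 := hsplit 0
  have h1 := hsplit 1
  have h2 := hsplit 2
  simp only [zero_add, show (1 : Fin 3) + 1 = 2 by decide, show (1 : Fin 3) + 2 = 0 by decide,
    show (2 : Fin 3) + 1 = 0 by decide, show (2 : Fin 3) + 2 = 1 by decide] at h0 h1 h2
  rw [hswap 0 2] at h0
  rw [hswap 1 0] at h1
  rw [hswap 2 1] at h2
  fin_cases x <;> simp only [Fin.zero_eta, Fin.mk_one, Fin.reduceFinMk, zero_add,
    show (1 : Fin 3) + 1 = 2 by decide, show (2 : Fin 3) + 1 = 0 by decide] <;> omega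

lemma filter_colorMatchings_univ {c : V → Fin 3} {g : V → V}
    (hg : ∀ v, g (g v) = v ∧ c (g v) ≠ c v) (t : Finset V) :
    {f ∈ colorMatchings c univ g | ∀ v ∈ t, f v = g v} =
      colorMatchings c (univ \ (t ∪ t.image g)) g := by
  ext f
  simp only [mem_filter, mem_colorMatchings, mem_univ, true_and, mem_sdiff, not_true_eq_false,
    false_imp_iff, implies_true, and_true, not_not, forall_const]
  simp only [mem_union, mem_image, not_or, not_exists, not_and]
  constructor
  · rintro ⟨h1, h2⟩
    have h3 : ∀ v, (v ∈ t ∨ ∃ a ∈ t, g a = v) → f v = g v := by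
      rintro v (hv | ⟨a, ha, rfl⟩)
      · exact h2 v hv
      · rw [(hg a).1, ← h2 a ha, (h1 a).1]
    refine ⟨fun v hv => ⟨⟨fun hfv => ?_, fun a ha hav => ?_⟩, h1 v⟩, h3⟩
    · exact hv.2 _ hfv (by rw [← h2 _ hfv, (h1 v).1])
    · apply hv.1
      have : f a = f v := by rw [h2 a ha, hav]
      rw [← (h1 v).1, ← this, (h1 a).1]
      exact ha
  · rintro ⟨h1, h2⟩
    refine ⟨fun v => ?_, fun v hv => h2 v (Or.inl hv)⟩
    by_cases hv : v ∈ t ∨ ∃ a ∈ t, g a = v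
    · have hgv : g v ∈ t ∨ ∃ a ∈ t, g a = g v := by
        rcases hv with hv | ⟨a, ha, rfl⟩
        · exact Or.inr ⟨v, hv, rfl⟩
        · rw [(hg a).1]; exact Or.inl ha
      rw [h2 v hv, h2 _ hgv]
      exact hg v
    · push Not at hv
      exact (h1 v ⟨hv.1, fun a ha => hv.2 a ha⟩).2

lemma card_filter_compl_involution {c : V → Fin 3} {m : ℕ} {g : V → V}
    (hc : ∀ x, #{v | c v = x} = 2 * m) (hg : ∀ v, g (g v) = v ∧ c (g v) ≠ c v)
    {t : Finset V} (ht : ∀ v ∈ t, c (g v) = c v + 1) (x : Fin 3) :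
    #{v ∈ univ \ (t ∪ t.image g) | c v = x} + #{v ∈ t | c v = x} + #{v ∈ t | c v = x + 2} =
      2 * m := by
  have key : ∀ a b : Fin 3, a = b + 2 ↔ a + 1 = b := by decide
  have e1 : ∀ a : Fin 3, a + 1 + 1 ≠ a := by decide
  have hinj : Function.Injective g := Function.LeftInverse.injective fun v => (hg v).1
  have h2 : #{v ∈ t | c v = x + 2} = #{v ∈ t.image g | c v = x} := by
    rw [filter_image, card_image_of_injective _ hinj]
    congr 1
    refine filter_congr fun v hv => ?_
    rw [ht v hv, key]
  rw [h2, ← hc x, add_assoc, ← card_union_of_disjoint, ← filter_union, ← card_union_of_disjoint,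
    ← filter_union]
  · congr 2
    exact sdiff_union_of_subset (subset_univ _)
  · exact disjoint_filter_filter sdiff_disjoint
  · refine disjoint_filter_filter (disjoint_left.2 fun v hv hv' => ?_)
    obtain ⟨a, ha, rfl⟩ := mem_image.1 hv'
    have h1 := ht _ hv
    rw [(hg a).1, ht a ha] at h1
    exact e1 _ h1.symm

lemma card_filter_forall_ne {c : V → Fin 3} {g : V → V} (s : Finset V) :
    (#{f ∈ colorMatchings c univ g | ∀ v ∈ s, f v ≠ g v} : ℤ) =
      ∑ t ∈ s.powerset, (-1) ^ #t * (#{f ∈ colorMatchings c univ g | ∀ v ∈ t, f v = g v} : ℤ) := by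
  have := inclusion_exclusion_sum_inf_compl s (fun v => ({f | f v = g v} : Finset (V → V)))
    (fun f => if f ∈ colorMatchings c univ g then (1 : ℤ) else 0)
  simp only [← sum_filter, sum_const, nsmul_eq_mul, mul_one, smul_eq_mul] at this
  have hne : {f ∈ colorMatchings c univ g | ∀ v ∈ s, f v ≠ g v} =
      {f ∈ s.inf fun v => ({f | f v = g v} : Finset (V → V))ᶜ | f ∈ colorMatchings c univ g} := by
    ext f
    simp [mem_inf, and_comm]
  have heq (t : Finset V) : {f ∈ colorMatchings c univ g | ∀ v ∈ t, f v = g v} =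
      {f ∈ t.inf fun v => ({f | f v = g v} : Finset (V → V)) | f ∈ colorMatchings c univ g} := by
    ext f
    simp [mem_inf, and_comm]
  simp_rw [hne, heq]
  exact this

lemma card_forall_ne_eq_sum {c : V → Fin 3} {m : ℕ} {g : V → V}
    (hc : ∀ x, #{v | c v = x} = 2 * m) (hg : ∀ v, g (g v) = v ∧ c (g v) ≠ c v) :
    (#{f : V → V | ∀ v, f (f v) = v ∧ c (f v) ≠ c v ∧ f v ≠ g v} : ℤ) =
      ∑ i ∈ Finset.range (m + 1), ∑ j ∈ Finset.range (m + 1),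
        ∑ k ∈ Finset.range (m + 1),
          (-1 : ℤ) ^ (i + j + k) * (m.choose i) * (m.choose j) * (m.choose k) *
            ((2 * m - i - j).choose (m - i)) * ((2 * m - j - k).choose (m - j)) *
            ((2 * m - k - i).choose (m - k)) *
            (m - i)! * (m - j)! * (m - k)! := by
  set s : Fin 3 → Finset V := fun x => {v | c v = x ∧ c (g v) = x + 1} with hs
  have hdisj : ∀ x y, x ≠ y → Disjoint (s x) (s y) := fun x y hxy =>
    disjoint_filter.2 fun u _ h1 h2 => hxy (h1.1.symm.trans h2.1)
  have hcard : ∀ x, #(s x) = m := card_filter_involution_eq hc hg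
  have hset : ({f : V → V | ∀ v, f (f v) = v ∧ c (f v) ≠ c v ∧ f v ≠ g v} : Finset (V → V)) =
      {f ∈ colorMatchings c univ g | ∀ v ∈ s 0 ∪ (s 1 ∪ s 2), f v ≠ g v} := by
    have key : ∀ a b : Fin 3, a ≠ b → a = b + 1 ∨ b = a + 1 := by decide
    have cases3 : ∀ a : Fin 3, a = 0 ∨ a = 1 ∨ a = 2 := by decide
    have hmem : ∀ v, v ∈ s 0 ∪ (s 1 ∪ s 2) ↔ c (g v) = c v + 1 := fun v => by
      simp only [hs, mem_union, mem_filter, mem_univ, true_and]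
      rcases cases3 (c v) with h | h | h <;> simp [h]
    ext f
    simp only [mem_filter, mem_colorMatchings, mem_univ, true_and, not_true_eq_false,
      false_imp_iff, implies_true, and_true, forall_const, hmem]
    constructor
    · exact fun h => ⟨fun v => ⟨(h v).1, (h v).2.1⟩, fun v _ => (h v).2.2⟩
    · rintro ⟨h1, h2⟩
      refine fun v => ⟨(h1 v).1, (h1 v).2, fun hv => ?_⟩
      rcases key _ _ (hg v).2 with h | h
      · exact h2 v h hv
      · refine h2 (g v) (by rwa [(hg v).1]) ?_
        rw [(hg v).1, ← hv, (h1 v).1]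
  set F : ℕ → ℕ → ℕ → ℤ := fun i j k => (-1 : ℤ) ^ (i + j + k) *
    (((2 * m - i - j).choose (m - i)) * ((2 * m - j - k).choose (m - j)) *
            ((2 * m - k - i).choose (m - k)) *
            (m - i)! * (m - j)! * (m - k)!) with hF
  have hterm : ∀ a ∈ (s 0).powerset, ∀ b ∈ (s 1).powerset, ∀ d ∈ (s 2).powerset,
      (-1 : ℤ) ^ #(a ∪ (b ∪ d)) *
        (#{f ∈ colorMatchings c univ g | ∀ v ∈ a ∪ (b ∪ d), f v = g v} : ℤ) =
      F #a #b #d := by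
    intro a ha b hb d hd
    rw [mem_powerset] at ha hb hd
    have hab : Disjoint a (b ∪ d) := disjoint_union_right.2
      ⟨(hdisj 0 1 (by decide)).mono ha hb, (hdisj 0 2 (by decide)).mono ha hd⟩
    have hbd : Disjoint b d := (hdisj 1 2 (by decide)).mono hb hd
    have ht : ∀ v ∈ a ∪ (b ∪ d), c (g v) = c v + 1 := by
      intro v hv
      have : ∃ x, v ∈ s x := by
        simp only [mem_union] at hv
        rcases hv with hv | hv | hv
        exacts [⟨0, ha hv⟩, ⟨1, hb hv⟩, ⟨2, hd hv⟩]
      obtain ⟨x, hx⟩ := this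
      obtain ⟨-, rfl, hx⟩ := mem_filter.1 hx
      exact hx
    have hfil : ∀ x y (e : Finset V), e ⊆ s x → #{v ∈ e | c v = y} = if x = y then #e else 0 := by
      intro x y e he
      have hce : ∀ v ∈ e, c v = x := fun v hv => (mem_filter.1 (he hv)).2.1
      split_ifs with hxy
      · rw [filter_true_of_mem fun v hv => (hce v hv).trans hxy]
      · rw [filter_false_of_mem fun v hv h => hxy ((hce v hv).symm.trans h), card_empty]
    have hcount : ∀ y, #{v ∈ a ∪ (b ∪ d) | c v = y} =
        (if 0 = y then #a else 0) + ((if 1 = y then #b else 0) + if 2 = y then #d else 0) := by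
      intro y
      rw [filter_union, filter_union, card_union_of_disjoint, card_union_of_disjoint,
        hfil 0 y a ha, hfil 1 y b hb, hfil 2 y d hd]
      · exact disjoint_filter_filter hbd
      · rw [← filter_union]
        exact disjoint_filter_filter hab
    have hW := card_filter_compl_involution hc hg ht
    have hW0 := hW 0
    have hW1 := hW 1
    have hW2 := hW 2
    simp [hcount, -union_assoc] at hW0 hW1 hW2
    have hla : #a ≤ m := (card_le_card ha).trans_eq (hcard 0)
    have hlb : #b ≤ m := (card_le_card hb).trans_eq (hcard 1)
    have hld : #d ≤ m := (card_le_card hd).trans_eq (hcard 2)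
    rw [filter_colorMatchings_univ hg, card_colorMatchings c (m - #a) (m - #b) (m - #d),
      card_union_of_disjoint hab, card_union_of_disjoint hbd, ← add_assoc,
      show m - #a + (m - #b) = 2 * m - #a - #b by omega,
      show m - #b + (m - #d) = 2 * m - #b - #d by omega,
      show m - #d + (m - #a) = 2 * m - #d - #a by omega]
    · simp only [hF]
      push_cast
      ring
    all_goals omega
  rw [hset, card_filter_forall_ne, sum_powerset_union (by simp [disjoint_union_right, hdisj])]
  simp_rw [sum_powerset_union (hdisj 1 2 (by decide))]
  rw [sum_congr rfl fun a ha => sum_congr rfl fun b hb => sum_congr rfl fun d hd =>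
    hterm a ha b hb d hd]
  have h2 : ∀ i j, ∑ d ∈ (s 2).powerset, F i j #d =
      ∑ k ∈ range (m + 1), m.choose k • F i j k := fun i j => by
    rw [sum_powerset_apply_card (F i j), hcard]
  have h1 : ∀ i, ∑ b ∈ (s 1).powerset, ∑ k ∈ range (m + 1), m.choose k • F i #b k =
      ∑ j ∈ range (m + 1), m.choose j • ∑ k ∈ range (m + 1), m.choose k • F i j k := fun i => by
    rw [sum_powerset_apply_card fun j => ∑ k ∈ range (m + 1), m.choose k • F i j k, hcard]
  simp_rw [h2, h1]
  rw [sum_powerset_apply_card fun i => ∑ j ∈ range (m + 1), m.choose j •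
    ∑ k ∈ range (m + 1), m.choose k • F i j k, hcard]
  refine sum_congr rfl fun i _ => ?_
  rw [smul_sum]
  refine sum_congr rfl fun j _ => ?_
  rw [smul_sum, smul_sum]
  refine sum_congr rfl fun k _ => ?_
  simp only [hF, nsmul_eq_mul]
  ring

end

/-- Inclusion-exclusion formula: for a fixed perfect matching `M` of `K_{2m,2m,2m}`,
the number of perfect matchings avoiding `M` equals
`∑_{0 ≤ i,j,k ≤ m} (-1)^{i+j+k} C(m,i)C(m,j)C(m,k) C(2m-i-j,m-i)C(2m-j-k,m-j)C(2m-k-i,m-k)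
(m-i)!(m-j)!(m-k)!`. -/
theorem stmt_9 (m : ℕ)
    (M : (completeMultipartiteGraph (fun _ : Fin 3 => Fin (2 * m))).Subgraph)
    (hM : M.IsPerfectMatching) :
    (pmCount (completeMultipartiteGraph (fun _ : Fin 3 => Fin (2 * m)) \
        M.spanningCoe) : ℤ) =
      ∑ i ∈ Finset.range (m + 1), ∑ j ∈ Finset.range (m + 1),
        ∑ k ∈ Finset.range (m + 1),
          (-1 : ℤ) ^ (i + j + k) * (m.choose i) * (m.choose j) * (m.choose k) *
            ((2 * m - i - j).choose (m - i)) * ((2 * m - j - k).choose (m - j)) *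
            ((2 * m - k - i).choose (m - k)) *
            (m - i)! * (m - j)! * (m - k)! := by
  classical
  rw [Subgraph.isPerfectMatching_iff] at hM
  choose g hg hg' using hM
  rw [pmCount_eq_card, ← card_forall_ne_eq_sum (c := Sigma.fst) (g := g)]
  · congr 2
    ext f
    simp only [mem_filter, mem_univ, true_and]
    refine forall_congr' fun v => and_congr_right fun _ => ?_
    rw [sdiff_adj, Subgraph.spanningCoe_adj]
    refine and_congr ne_comm (not_congr ⟨fun h => hg' _ _ h, fun h => h ▸ hg v⟩)
  · intro x
    have : ({v | v.1 = x} : Finset (Σ _ : Fin 3, Fin (2 * m))) =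
        univ.map (Function.Embedding.sigmaMk x) := by
      ext ⟨y, z⟩
      simp only [mem_filter, mem_univ, true_and, mem_map, Function.Embedding.sigmaMk_apply]
      constructor
      · rintro rfl; exact ⟨z, rfl⟩
      · rintro ⟨a, h⟩; exact (congrArg Sigma.fst h).symm
    rw [this, card_map, Finset.card_univ, Fintype.card_fin]
  · exact fun v => ⟨(hg' _ _ (hg v).symm).symm, fun h => (hg v).adj_sub h.symm⟩
end

section
/- For fixed r ≥ 3 and any balanced perfect matching M in K_{r×(r-1)m}, the ratio bpm(K_{r×(r-1)m} - M) / bpm(K_{r×(r-1)m}) converges to e^{-r/(2r-2)} as m → ∞. -/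
open Nat SimpleGraph Filter Topology

/-- The number of edges of a subgraph `M` of a graph on a sigma type joining
class `i` to class `j` (for `i ≠ j`, each edge counted once as an ordered pair). -/
noncomputable def crossCount {ι : Type} {β : ι → Type}
    {G : SimpleGraph (Σ i, β i)} (M : G.Subgraph) (i j : ι) : ℕ :=
  {p : (Σ i, β i) × (Σ i, β i) | p.1.1 = i ∧ p.2.1 = j ∧ M.Adj p.1 p.2}.ncard

/-- The number of balanced perfect matchings (perfect matchings with exactly `m`
edges between each pair of distinct classes) of a graph on a sigma type. -/
noncomputable def bpmCount {ι : Type} {β : ι → Type}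
    (G : SimpleGraph (Σ i, β i)) (m : ℕ) : ℕ :=
  {M : G.Subgraph | M.IsPerfectMatching ∧
    ∀ i j : ι, i ≠ j → crossCount M i j = m}.ncard

section BalancedInvolutions

open Finset

variable {V ι : Type} [Fintype V] [DecidableEq V] [DecidableEq ι]

/-- A fixed-point-free involution pairing vertices of different colours, with exactly `m` pairs
for each pair of distinct colours. -/
def IsBalanced (c : V → ι) (m : ℕ) (σ : V → V) : Prop :=
  Function.Involutive σ ∧ (∀ u, c (σ u) ≠ c u) ∧
    ∀ i j, i ≠ j → #{u | c u = i ∧ c (σ u) = j} = m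

/-- `σ` agrees with `π` wherever `π` moves a vertex. -/
def Extends (π σ : V → V) : Prop := ∀ u, π u ≠ u → σ u = π u

variable [Fintype ι] in
/-- An involution `π` (a partial matching, whose fixed points are the unmatched vertices) for which
`d e` pairs of colours `e` are missing. -/
structure IsPartial (c : V → ι) (m : ℕ) (π : V → V) (d : Sym2 ι → ℕ) : Prop where
  invol : Function.Involutive π
  color : ∀ u, c (π u) = c u → π u = u
  count : ∀ i j, i ≠ j → #{u | c u = i ∧ c (π u) = j} + d s(i, j) = m
  diag : ∀ i, d s(i, i) = 0
  free : ∀ i, #{u | c u = i ∧ π u = u} = ∑ j, d s(i, j)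

/-- Add the pair `v`, `w` to a partial matching. -/
def link (π : V → V) (v w : V) : V → V := fun u => if u = v then w else if u = w then v else π u

open Classical in
/-- The number of balanced involutions extending `π`. -/
noncomputable def numExt (c : V → ι) (m : ℕ) (π : V → V) : ℕ :=
  #{σ : V → V | IsBalanced c m σ ∧ Extends π σ}

lemma card_count_link {c : V → ι} {π : V → V} {v w : V} (hv : π v = v) (hw : π w = w)
    (hvw : c v ≠ c w) {a b : ι} (hab : a ≠ b) :
    #{u | c u = a ∧ c (link π v w u) = b} =
      #{u | c u = a ∧ c (π u) = b} + if s(a, b) = s(c v, c w) then 1 else 0 := by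
  have hne : v ≠ w := fun h => hvw (by rw [h])
  have key : ∀ u, (if c u = a ∧ c (link π v w u) = b then 1 else 0) =
      (if c u = a ∧ c (π u) = b then 1 else 0) +
      ((if u = v then (if c v = a ∧ c w = b then 1 else 0) else 0) +
        (if u = w then (if c w = a ∧ c v = b then 1 else 0) else 0)) := by
    intro u
    unfold link
    by_cases h1 : u = v
    · subst h1; simp only [hne, hv, if_true, if_false]; grind
    · by_cases h2 : u = w
      · subst h2; simp only [h1, hw, if_true, if_false]; grind
      · simp [h1, h2]
  rw [card_filter, card_filter, sum_congr rfl fun u _ => key u, sum_add_distrib, sum_add_distrib]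
  simp only [sum_ite_eq', mem_univ, if_true, Sym2.eq_iff]
  grind

lemma card_free_link {c : V → ι} {π : V → V} {v w : V} (hv : π v = v) (hw : π w = w)
    (hvw : c v ≠ c w) (a : ι) :
    #{u | c u = a ∧ π u = u} = #{u | c u = a ∧ link π v w u = u} +
      (if a = c v then 1 else 0) + (if a = c w then 1 else 0) := by
  have hne : v ≠ w := fun h => hvw (by rw [h])
  have key : ∀ u, (if c u = a ∧ π u = u then 1 else 0) =
      (if c u = a ∧ link π v w u = u then 1 else 0) +
      (if u = v then (if a = c v then 1 else 0) else 0) +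
        (if u = w then (if a = c w then 1 else 0) else 0) := by
    intro u
    unfold link
    by_cases h1 : u = v
    · subst h1; simp only [hne, hv, if_true, if_false]; grind
    · by_cases h2 : u = w
      · subst h2; simp only [h1, hw, if_true, if_false]; grind
      · simp [h1, h2]
  rw [card_filter, card_filter, sum_congr rfl fun u _ => key u, sum_add_distrib, sum_add_distrib]
  simp only [sum_ite_eq', mem_univ, if_true]

lemma numExt_eq_sum {c : V → ι} {m : ℕ} {π : V → V} (hinv : Function.Involutive π) {v : V}
    (hv : π v = v) :
    numExt c m π = ∑ w with π w = w ∧ c w ≠ c v, numExt c m (link π v w) := by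
  classical
  unfold numExt
  rw [card_eq_sum_card_fiberwise (f := fun σ => σ v) (t := {w | π w = w ∧ c w ≠ c v})]
  · refine sum_congr rfl fun w hw => ?_
    simp only [mem_filter, mem_univ, true_and] at hw
    rw [filter_filter]
    congr 1
    ext σ
    simp only [mem_filter, mem_univ, true_and]
    have hne : v ≠ w := fun h => hw.2 (by rw [h])
    constructor
    · rintro ⟨⟨hσ, he⟩, hvw⟩
      refine ⟨hσ, fun u => ?_⟩
      have h1 := he u
      have h2 := hσ.1 v
      unfold link
      grind
    · rintro ⟨hσ, he⟩
      have h1 := he v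
      refine ⟨⟨hσ, fun u hu => ?_⟩, ?_⟩
      · have h1 := he u
        unfold link at h1
        grind
      · unfold link at h1
        grind
  · intro σ hσ
    simp only [coe_filter, mem_univ, true_and, Set.mem_ofPred_eq] at hσ ⊢
    obtain ⟨hσ, he⟩ := hσ
    refine ⟨?_, hσ.2.1 v⟩
    by_contra h
    have h1 := he _ h
    rw [hσ.1 v] at h1
    have h2 := hinv (σ v)
    rw [← h1, hv] at h2
    exact h (by rw [← h2, hv])

variable [Fintype ι]

lemma sum_indicator_sym2 {i j : ι} (hij : i ≠ j) (a : ι) :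
    ∑ l, (if s(a, l) = s(i, j) then 1 else 0 : ℕ) =
      (if a = i then 1 else 0) + (if a = j then 1 else 0) := by
  have key : ∀ l, (if s(a, l) = s(i, j) then 1 else 0 : ℕ) =
      (if l = j then (if a = i then 1 else 0) else 0) +
        (if l = i then (if a = j then 1 else 0) else 0) := by
    intro l
    simp only [Sym2.eq_iff]
    grind
  rw [sum_congr rfl fun u _ => key u, sum_add_distrib]
  simp

lemma IsPartial.link {c : V → ι} {m : ℕ} {π : V → V} {d d' : Sym2 ι → ℕ} {v w : V}
    (h : IsPartial c m π d) (hv : π v = v) (hw : π w = w) (hvw : c v ≠ c w)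
    (hd : ∀ e, d e = d' e + if e = s(c v, c w) then 1 else 0) :
    IsPartial c m (link π v w) d' := by
  have hne : v ≠ w := fun h => hvw (by rw [h])
  have hinv := h.invol
  refine ⟨fun u => ?_, fun u hu => ?_, fun i j hij => ?_, fun i => ?_, fun i => ?_⟩
  · have h3 := hinv u
    have h4 : π u = v → u = v := fun h => by rw [← h3, h, hv]
    have h5 : π u = w → u = w := fun h => by rw [← h3, h, hw]
    unfold _root_.link
    grind
  · have := h.color u
    unfold _root_.link at hu ⊢
    grind
  · have h1 := h.count i j hij
    rw [hd] at h1
    rw [card_count_link hv hw hvw hij]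
    omega
  · have := h.diag i
    rw [hd] at this
    omega
  · have h1 := h.free i
    simp only [hd, sum_add_distrib, sum_indicator_sym2 hvw] at h1
    rw [card_free_link hv hw hvw] at h1
    omega

lemma IsPartial.pos_of_extends_link {c : V → ι} {m : ℕ} {π σ : V → V} {d : Sym2 ι → ℕ} {v w : V}
    (h : IsPartial c m π d) (hv : π v = v) (hw : π w = w) (hvw : c v ≠ c w)
    (hσ : IsBalanced c m σ) (hext : Extends (_root_.link π v w) σ) : 0 < d s(c v, c w) := by
  have h1 := h.count _ _ hvw
  have h2 := hσ.2.2 _ _ hvw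
  have h3 := card_count_link hv hw hvw hvw
  have h4 : #{u | c u = c v ∧ c (_root_.link π v w u) = c w} ≤
      #{u | c u = c v ∧ c (σ u) = c w} := by
    refine card_le_card fun u hu => ?_
    simp only [mem_filter, mem_univ, true_and] at hu ⊢
    rw [hext u fun h => hvw (by rw [← hu.1, ← hu.2, h])]
    exact hu
  simp only [if_true] at h3
  omega

lemma prod_factorial_add_single {α : Type} [Fintype α] [DecidableEq α] {d d' : α → ℕ} {x : α}
    (hd : ∀ e, d e = d' e + if e = x then 1 else 0) :
    ∏ e, (d e)! = d x * ∏ e, (d' e)! := by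
  have key : ∀ e, (d e)! = (d' e)! * if e = x then d x else 1 := by
    intro e
    have h1 := hd e
    split_ifs at h1 ⊢ with h
    · subst h
      rw [h1, Nat.factorial_succ, mul_comm]
    · simp [h1]
  rw [prod_congr rfl fun e _ => key e, prod_mul_distrib, prod_ite_eq' univ x]
  simp [mul_comm]

lemma prod_factorial_free_link {c : V → ι} {π : V → V} {v w : V} (hv : π v = v) (hw : π w = w)
    (hvw : c v ≠ c w) :
    ∏ i, (#{u | c u = i ∧ π u = u})! = #{u | c u = c v ∧ π u = u} * #{u | c u = c w ∧ π u = u} *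
      ∏ i, (#{u | c u = i ∧ link π v w u = u})! := by
  rw [prod_factorial_add_single (x := c w) (d' := fun i => #{u | c u = i ∧ link π v w u = u} +
    if i = c v then 1 else 0) (fun i => card_free_link hv hw hvw i),
    prod_factorial_add_single (x := c v) (d' := fun i => #{u | c u = i ∧ link π v w u = u})
      (fun i => rfl)]
  rw [card_free_link hv hw hvw (c v)]
  simp only [if_true, if_neg hvw, add_zero]
  ring

theorem IsPartial.numExt_mul {c : V → ι} {m : ℕ} {π : V → V} {d : Sym2 ι → ℕ}
    (h : IsPartial c m π d) :
    numExt c m π * ∏ e, (d e)! = ∏ i, (#{u | c u = i ∧ π u = u})! := by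
  classical
  induction hN : ∑ e, d e using Nat.strong_induction_on generalizing π d with
  | _ N ih =>
  subst hN
  by_cases hfree : ∃ v, π v = v
  · obtain ⟨v, hv⟩ := hfree
    set n : ι → ℕ := fun i => #{u | c u = i ∧ π u = u} with hn
    have npos : ∀ w, π w = w → 0 < n (c w) := fun w hw =>
      card_pos.2 ⟨w, by simp [hw]⟩
    have step : ∀ w, π w = w → c w ≠ c v →
        (numExt c m (_root_.link π v w) : ℚ) * ∏ e, ((d e)! : ℚ) =
          d s(c v, c w) / (n (c v) * n (c w)) * ∏ i, ((n i)! : ℚ) := by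
      intro w hw hwv
      have hvw := hwv.symm
      have p1 := npos v hv
      have p2 := npos w hw
      rcases Nat.eq_zero_or_pos (d s(c v, c w)) with h0 | hpos
      · have : numExt c m (_root_.link π v w) = 0 := by
          unfold numExt
          rw [Finset.card_eq_zero, filter_eq_empty_iff]
          rintro σ - ⟨hσ, he⟩
          exact (h.pos_of_extends_link hv hw hvw hσ he).ne' h0
        simp [this, h0]
      · let d' : Sym2 ι → ℕ := fun e => d e - if e = s(c v, c w) then 1 else 0
        have hd : ∀ e, d e = d' e + if e = s(c v, c w) then 1 else 0 := by
          intro e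
          simp only [d']
          split_ifs with he
          · subst he; omega
          · rfl
        have hlt : ∑ e, d' e < ∑ e, d e := by
          simp only [hd, sum_add_distrib, sum_ite_eq', mem_univ, if_true]
          omega
        have h1 := ih _ hlt (h.link hv hw hvw hd) rfl
        have h2 := prod_factorial_add_single hd
        have h3 := prod_factorial_free_link hv hw hvw
        rw [← h1] at h3
        change ∏ i, (n i)! = n (c v) * n (c w) * _ at h3
        have h2' : ∏ e, ((d e)! : ℚ) = d s(c v, c w) * ∏ e, ((d' e)! : ℚ) := by exact_mod_cast h2
        have h3' : ∏ i, ((n i)! : ℚ) = n (c v) * n (c w) *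
          (numExt c m (_root_.link π v w) * ∏ e, ((d' e)! : ℚ)) := by exact_mod_cast h3
        rw [h2', h3']
        have p1' : (n (c v) : ℚ) ≠ 0 := by exact_mod_cast p1.ne'
        have p2' : (n (c w) : ℚ) ≠ 0 := by exact_mod_cast p2.ne'
        field_simp
    have hsum : (∑ w with π w = w ∧ c w ≠ c v,
        (d s(c v, c w) : ℚ) / (n (c v) * n (c w))) = 1 := by
      have e1 : (∑ w with π w = w ∧ c w ≠ c v, (d s(c v, c w) : ℚ) / (n (c v) * n (c w))) =
          ∑ w with π w = w, (d s(c v, c w) : ℚ) / (n (c v) * n (c w)) := by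
        refine sum_subset (fun w hw => ?_) fun w hw hw' => ?_
        · simp only [mem_filter, mem_univ, true_and] at hw ⊢
          exact hw.1
        · simp only [mem_filter, mem_univ, true_and, not_and, not_not] at hw hw'
          rw [hw' hw, h.diag]
          simp
      rw [e1, ← sum_fiberwise _ c]
      have e2 : ∀ j, (∑ w ∈ {w | π w = w} with c w = j, (d s(c v, c w) : ℚ) /
          (n (c v) * n (c w))) = d s(c v, j) / n (c v) := by
        intro j
        rw [filter_filter]
        rw [sum_congr rfl (g := fun _ => (d s(c v, j) : ℚ) / (n (c v) * n j))]
        · rw [sum_const, nsmul_eq_mul]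
          have e3 : #{a | π a = a ∧ c a = j} = n j := by
            simp only [hn]; congr 1; ext; simp [and_comm]
          rw [e3]
          rcases Nat.eq_zero_or_pos (n j) with h0 | hp
          · have : d s(c v, j) = 0 := by
              have h4 := h.free j
              change n j = _ at h4
              rw [h0] at h4
              have := (sum_eq_zero_iff.1 h4.symm) (c v) (mem_univ _)
              rwa [Sym2.eq_swap]
            simp [this]
          · have : (n j : ℚ) ≠ 0 := by exact_mod_cast hp.ne'
            field_simp
        · intro w hw
          simp only [mem_filter, mem_univ, true_and] at hw
          rw [hw.2]
      rw [sum_congr rfl fun j _ => e2 j]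
      rw [← sum_div]
      have h4 := h.free (c v)
      change n (c v) = _ at h4
      have h5 : (n (c v) : ℚ) = ∑ j, (d s(c v, j) : ℚ) := by exact_mod_cast h4
      rw [← h5]
      exact div_self (by exact_mod_cast (npos v hv).ne')
    have : (numExt c m π : ℚ) * ∏ e, ((d e)! : ℚ) = ∏ i, ((n i)! : ℚ) := by
      rw [numExt_eq_sum h.invol hv]
      push_cast
      rw [sum_mul, sum_congr rfl (fun w hw => step w (mem_filter.1 hw).2.1 (mem_filter.1 hw).2.2),
        ← sum_mul, hsum, one_mul]
    exact_mod_cast this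
  · push Not at hfree
    have hn : ∀ i, #{u | c u = i ∧ π u = u} = 0 := by
      intro i
      simp [hfree]
    have hd : ∀ e, d e = 0 := by
      intro e
      induction e with
      | _ i j =>
      have := h.free i
      rw [hn] at this
      exact (sum_eq_zero_iff.1 this.symm) j (mem_univ _)
    have h1 : numExt c m π = 1 := by
      unfold numExt
      rw [card_eq_one]
      refine ⟨π, ?_⟩
      ext σ
      simp only [mem_filter, mem_univ, true_and, mem_singleton]
      constructor
      · rintro ⟨-, he⟩
        exact funext fun u => he u (hfree u)
      · rintro rfl
        refine ⟨⟨h.invol, fun u hu => hfree u (h.color u hu), fun i j hij => ?_⟩, fun _ _ => rfl⟩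
        have := h.count i j hij
        rwa [hd, add_zero] at this
    simp [h1, hd, hn]

end BalancedInvolutions

section AvoidingCount

open Finset

variable {V ι : Type}

section LowerEnds

variable [Fintype V] [LinearOrder ι]

/-- One end of each pair of `τ`: the one with the smaller colour. -/
def lowerEnds (c : V → ι) (τ : V → V) : Finset V := {v | c v < c (τ v)}

lemma two_mul_card_lowerEnds {c : V → ι} {m : ℕ} {τ : V → V}
    (hτ : IsBalanced c m τ) : 2 * #(lowerEnds c τ) = Fintype.card V := by
  classical
  have h1 : #(lowerEnds c τ) = #{v | ¬ c v < c (τ v)} := by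
    refine card_bij' (fun v _ => τ v) (fun v _ => τ v) ?_ ?_ (fun v _ => hτ.1 v)
      (fun v _ => hτ.1 v)
    · intro v hv
      simp only [lowerEnds, mem_filter, mem_univ, true_and, hτ.1 v] at hv ⊢
      exact hv.le.not_gt
    · intro v hv
      simp only [lowerEnds, mem_filter, mem_univ, true_and, hτ.1 v, not_lt] at hv ⊢
      exact lt_of_le_of_ne hv (hτ.2.1 v)
  have h2 := card_filter_add_card_filter_not (s := univ) (fun v => c v < c (τ v))
  rw [two_mul]
  nth_rw 2 [h1]
  exact h2

end LowerEnds

variable [DecidableEq V]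

/-- The restriction of the involution `τ` to the pairs meeting `S`. -/
def restrictPairs (τ : V → V) (S : Finset V) : V → V :=
  fun u => if u ∈ S ∨ τ u ∈ S then τ u else u

lemma restrictPairs_empty (τ : V → V) : restrictPairs τ ∅ = id := by
  ext u
  simp [restrictPairs]

lemma restrictPairs_insert {τ : V → V} (hτ : Function.Involutive τ) {S : Finset V} (v : V) :
    restrictPairs τ (insert v S) = link (restrictPairs τ S) v (τ v) := by
  ext u
  have h1 := hτ u
  have h2 := hτ v
  unfold restrictPairs link
  simp only [mem_insert]
  grind

variable [Fintype V] [LinearOrder ι]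

lemma extends_restrictPairs_iff {c : V → ι} {m : ℕ} {τ σ : V → V} (hτ : IsBalanced c m τ)
    (hσ : IsBalanced c m σ) (S : Finset V) :
    Extends (restrictPairs τ S) σ ↔ ∀ v ∈ S, σ v = τ v := by
  constructor
  · intro h v hv
    have h1 := h v
    have h2 : τ v ≠ v := fun h => hτ.2.1 v (by rw [h])
    simp only [restrictPairs, hv, true_or, if_true] at h1
    exact h1 h2
  · intro h u hu
    have h1 := h u
    have h2 := h (τ u)
    have h3 := hτ.1 u
    have h4 := hσ.1 (τ u)
    unfold restrictPairs at hu ⊢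
    grind

lemma card_avoiding {c : V → ι} {m : ℕ} {τ : V → V}
    (hτ : IsBalanced c m τ) {F : Finset (V → V)}
    (hF : ∀ σ, σ ∈ F ↔ IsBalanced c m σ ∧ ∀ u, σ u ≠ τ u) :
    (#F : ℤ) = ∑ k ∈ range (#(lowerEnds c τ) + 1), (-1) ^ k *
      ∑ S ∈ powersetCard k (lowerEnds c τ), (numExt c m (restrictPairs τ S) : ℤ) := by
  classical
  set H := lowerEnds c τ with hH
  have h1 : ∑ k ∈ range (#H + 1), (-1) ^ k *
      ∑ S ∈ powersetCard k H, (numExt c m (restrictPairs τ S) : ℤ) =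
      ∑ S ∈ H.powerset, (-1) ^ #S * (numExt c m (restrictPairs τ S) : ℤ) := by
    rw [sum_powerset]
    refine sum_congr rfl fun k _ => ?_
    rw [mul_sum]
    exact sum_congr rfl fun S hS => by rw [(mem_powersetCard.1 hS).2]
  have h3 : ∑ S ∈ H.powerset, (-1) ^ #S * (numExt c m (restrictPairs τ S) : ℤ) =
      ∑ S ∈ H.powerset, ∑ σ with IsBalanced c m σ,
        if S ⊆ {v ∈ H | σ v = τ v} then (-1) ^ #S else 0 := by
    refine sum_congr rfl fun S hS => ?_
    unfold numExt
    rw [← filter_filter, ← sum_filter, sum_const, nsmul_eq_mul, mul_comm]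
    congr 3
    refine filter_congr fun σ hσ => ?_
    rw [extends_restrictPairs_iff hτ (mem_filter.1 hσ).2]
    have := mem_powerset.1 hS
    simp only [subset_iff, mem_filter] at this ⊢
    exact ⟨fun h v hv => ⟨this hv, h v hv⟩, fun h v hv => (h hv).2⟩
  rw [h1, h3, sum_comm]
  have h4 : ∀ σ ∈ ({σ | IsBalanced c m σ} : Finset (V → V)),
      (∑ S ∈ H.powerset, if S ⊆ {v ∈ H | σ v = τ v} then (-1 : ℤ) ^ #S else 0) =
        if ∀ u, σ u ≠ τ u then 1 else 0 := by
    intro σ hσ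
    have hσ := (mem_filter.1 hσ).2
    rw [← sum_filter]
    have : {S ∈ H.powerset | S ⊆ {v ∈ H | σ v = τ v}} = ({v ∈ H | σ v = τ v}).powerset := by
      ext S
      simp only [mem_filter, mem_powerset]
      exact ⟨fun h => h.2, fun h => ⟨h.trans (filter_subset _ _), h⟩⟩
    rw [this, sum_powerset_neg_one_pow_card]
    refine if_congr ?_ rfl rfl
    rw [filter_eq_empty_iff]
    refine ⟨fun h u hu => ?_, fun h u _ => h u⟩
    rcases lt_or_gt_of_ne (hτ.2.1 u) with hlt | hgt
    · refine h (x := τ u) ?_ ?_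
      · simp [hH, lowerEnds, hτ.1 u, hlt]
      · rw [hτ.1 u, ← hu, hσ.1 u]
    · exact h (x := u) (by simp [hH, lowerEnds, hgt]) hu
  rw [sum_congr rfl h4, ← sum_filter, filter_filter, sum_const, nsmul_eq_mul, mul_one]
  congr 2
  ext σ
  simp [hF]

variable [Fintype ι]

lemma exists_isPartial_restrictPairs {c : V → ι} {m : ℕ} {τ : V → V}
    (hτ : IsBalanced c m τ) {D : Sym2 ι → ℕ} (hD : IsPartial c m id D) {S : Finset V}
    (hS : S ⊆ lowerEnds c τ) :
    ∃ d, IsPartial c m (restrictPairs τ S) d ∧ (∀ e, d e ≤ D e) ∧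
      ∑ e, d e + #S = ∑ e, D e ∧
      ∑ i, #{u | c u = i ∧ restrictPairs τ S u = u} + 2 * #S = ∑ i, #{u | c u = i} := by
  induction S using Finset.induction_on with
  | empty =>
    rw [restrictPairs_empty]
    exact ⟨D, hD, fun e => le_rfl, by simp, by simp⟩
  | insert v S hv ih =>
    obtain ⟨d, hd, hle, hsum, hfree⟩ := ih ((subset_insert v S).trans hS)
    have hlow : ∀ u ∈ S, c u < c (τ u) := fun u hu =>
      (mem_filter.1 (hS (mem_insert_of_mem hu))).2
    have hvlow : c v < c (τ v) := (mem_filter.1 (hS (mem_insert_self v S))).2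
    have hτv : τ v ∉ S := fun h => by
      have := hlow _ h
      rw [hτ.1 v] at this
      exact lt_asymm this hvlow
    have h1 : restrictPairs τ S v = v := by simp [restrictPairs, hv, hτv]
    have h2 : restrictPairs τ S (τ v) = τ v := by simp [restrictPairs, hv, hτv, hτ.1 v]
    have hpos : 0 < d s(c v, c (τ v)) := by
      refine hd.pos_of_extends_link h1 h2 hvlow.ne hτ ?_
      rw [← restrictPairs_insert hτ.1, extends_restrictPairs_iff hτ hτ]
      exact fun _ _ => rfl
    let d' : Sym2 ι → ℕ := fun e => d e - if e = s(c v, c (τ v)) then 1 else 0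
    have hdd : ∀ e, d e = d' e + if e = s(c v, c (τ v)) then 1 else 0 := by
      intro e
      simp only [d']
      split_ifs with he
      · subst he; omega
      · rfl
    refine ⟨d', ?_, fun e => (Nat.sub_le _ _).trans (hle e), ?_, ?_⟩
    · rw [restrictPairs_insert hτ.1]
      exact hd.link h1 h2 hvlow.ne hdd
    · simp only [hdd, sum_add_distrib, sum_ite_eq', mem_univ, if_true] at hsum
      rw [card_insert_of_notMem hv]
      omega
    · simp only [card_free_link h1 h2 hvlow.ne, sum_add_distrib, sum_ite_eq', mem_univ,
        if_true] at hfree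
      rw [restrictPairs_insert hτ.1, card_insert_of_notMem hv]
      omega

lemma exists_numExt_mul_eq {c : V → ι} {m n : ℕ} {τ : V → V}
    (hτ : IsBalanced c m τ) {D : Sym2 ι → ℕ} (hD : IsPartial c m id D)
    (hDm : ∀ e, D e = 0 ∨ D e = m) (hn : ∀ i, #{u | c u = i} = n) {S : Finset V}
    (hS : S ⊆ lowerEnds c τ) :
    ∃ (p : Sym2 ι → ℕ) (q : ι → ℕ), ∑ e, p e = #S ∧ ∑ i, q i = 2 * #S ∧
      (∀ e, p e = 0 ∨ D e = m) ∧ (∀ i, q i ≤ n) ∧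
      numExt c m (restrictPairs τ S) * ∏ i, n.descFactorial (q i) =
        numExt c m id * ∏ e, (D e).descFactorial (p e) := by
  obtain ⟨d, hd, hle, hsum, hfree⟩ := exists_isPartial_restrictPairs hτ hD hS
  have hfle : ∀ i, #{u | c u = i ∧ restrictPairs τ S u = u} ≤ n := fun i => by
    rw [← hn i]
    exact card_le_card (monotone_filter_right _ fun u _ h => h.1)
  refine ⟨fun e => D e - d e, fun i => n - #{u | c u = i ∧ restrictPairs τ S u = u},
    ?_, ?_, fun e => ?_, fun i => Nat.sub_le _ _, ?_⟩
  · rw [sum_tsub_distrib _ fun e _ => hle e]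
    omega
  · rw [sum_tsub_distrib _ fun i _ => hfle i]
    simp only [hn] at hfree
    omega
  · rcases hDm e with h | h
    · left; simp [h]
    · exact Or.inr h
  · have h1 := hd.numExt_mul
    have h2 := hD.numExt_mul
    simp only [id, and_true, hn] at h2
    have h3 : ∀ e, (D e)! = (d e)! * (D e).descFactorial (D e - d e) := fun e => by
      have := Nat.factorial_mul_descFactorial (Nat.sub_le (D e) (d e))
      rwa [Nat.sub_sub_self (hle e), eq_comm] at this
    have h4 : ∀ i, n ! = (#{u | c u = i ∧ restrictPairs τ S u = u})! *
        n.descFactorial (n - #{u | c u = i ∧ restrictPairs τ S u = u}) := fun i => by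
      have := Nat.factorial_mul_descFactorial
        (Nat.sub_le n (#{u | c u = i ∧ restrictPairs τ S u = u}))
      rwa [Nat.sub_sub_self (hfle i), eq_comm] at this
    rw [prod_congr rfl fun e _ => h3 e, prod_congr rfl fun i _ => h4 i, prod_mul_distrib,
      prod_mul_distrib, ← h1] at h2
    have h5 : 0 < ∏ e, (d e)! := prod_pos fun e _ => Nat.factorial_pos _
    refine Nat.eq_of_mul_eq_mul_left h5 ?_
    linarith

lemma pow_le_exp_pow_mul_descFactorial {n k : ℕ} (hk : k ≤ n) :
    (n : ℝ) ^ k ≤ Real.exp 1 ^ k * n.descFactorial k := by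
  induction n generalizing k with
  | zero => simp [Nat.le_zero.1 hk]
  | succ n ih =>
    cases k with
    | zero => simp
    | succ k =>
      have hk : k ≤ n := by omega
      have h1 := ih hk
      have h2 : ((n : ℝ) + 1) ^ k ≤ Real.exp 1 * n ^ k := by
        rcases Nat.eq_zero_or_pos n with h0 | hpos
        · have : k = 0 := by omega
          subst this
          simp
        · have hn : (0 : ℝ) < n := by exact_mod_cast hpos
          have h3 : ((n : ℝ) + 1) = n * (1 / n + 1) := by field_simp; ring
          have h4 : (1 / (n : ℝ) + 1) ^ k ≤ Real.exp 1 := by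
            calc (1 / (n : ℝ) + 1) ^ k ≤ Real.exp (1 / n) ^ k := by
                  gcongr
                  exact Real.add_one_le_exp _
              _ = Real.exp (k * (1 / n)) := by rw [← Real.exp_nat_mul]
              _ ≤ Real.exp 1 := by
                  apply Real.exp_le_exp.2
                  rw [mul_one_div, div_le_one hn]
                  exact_mod_cast hk
          rw [h3, mul_pow, mul_comm]
          gcongr
      rw [Nat.succ_descFactorial_succ]
      push_cast
      calc ((n : ℝ) + 1) ^ (k + 1) = (n + 1) ^ k * (n + 1) := pow_succ _ _
        _ ≤ Real.exp 1 * n ^ k * (n + 1) := by gcongr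
        _ ≤ Real.exp 1 * (Real.exp 1 ^ k * n.descFactorial k) * (n + 1) := by gcongr
        _ = _ := by ring

lemma sub_pow_le_prod_descFactorial {α : Type} [Fintype α] {N : α → ℕ} {q : α → ℕ} {n K : ℕ}
    (hN : ∀ i, q i = 0 ∨ N i = n) (hq : ∑ i, q i = K) :
    (n - K) ^ K ≤ ∏ i, (N i).descFactorial (q i) := by
  rw [← hq, ← prod_pow_eq_pow_sum]
  refine prod_le_prod' fun i _ => ?_
  rcases hN i with h | h
  · simp [h]
  · rw [h]
    refine le_trans (Nat.pow_le_pow_left ?_ _) (Nat.pow_sub_le_descFactorial n (q i))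
    have := single_le_sum (f := q) (fun _ _ => Nat.zero_le _) (mem_univ i)
    omega

lemma prod_descFactorial_le_pow {α : Type} [Fintype α] {N : α → ℕ} {q : α → ℕ} {n K : ℕ}
    (hN : ∀ i, q i = 0 ∨ N i = n) (hq : ∑ i, q i = K) :
    ∏ i, (N i).descFactorial (q i) ≤ n ^ K := by
  rw [← hq, ← prod_pow_eq_pow_sum]
  refine prod_le_prod' fun i _ => ?_
  rcases hN i with h | h
  · simp [h]
  · rw [h]
    exact Nat.descFactorial_le_pow n (q i)

lemma numExt_restrictPairs_bounds {c : V → ι} {m n : ℕ} {τ : V → V}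
    (hτ : IsBalanced c m τ) {D : Sym2 ι → ℕ} (hD : IsPartial c m id D)
    (hDm : ∀ e, D e = 0 ∨ D e = m) (hn : ∀ i, #{u | c u = i} = n) {S : Finset V}
    (hS : S ⊆ lowerEnds c τ) {k : ℕ} (hk : #S = k) :
    numExt c m id * (m - k) ^ k ≤ numExt c m (restrictPairs τ S) * n ^ (2 * k) ∧
    numExt c m (restrictPairs τ S) * (n - 2 * k) ^ (2 * k) ≤ numExt c m id * m ^ k ∧
    (numExt c m (restrictPairs τ S) : ℝ) * n ^ (2 * k) ≤
      numExt c m id * m ^ k * Real.exp 1 ^ (2 * k) := by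
  obtain ⟨p, q, hp, hq, hpD, hqn, h⟩ := exists_numExt_mul_eq hτ hD hDm hn hS
  rw [hk] at hp hq
  have x1 := sub_pow_le_prod_descFactorial hpD hp
  have x2 := prod_descFactorial_le_pow hpD hp
  have y1 := sub_pow_le_prod_descFactorial (N := fun _ => n) (fun i => Or.inr rfl) hq
  have y2 := prod_descFactorial_le_pow (N := fun _ => n) (fun i => Or.inr rfl) hq
  have y3 : (n : ℝ) ^ (2 * k) ≤
      Real.exp 1 ^ (2 * k) * ∏ i, (n.descFactorial (q i) : ℝ) := by
    rw [← hq, ← prod_pow_eq_pow_sum, ← prod_pow_eq_pow_sum, ← prod_mul_distrib]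
    exact prod_le_prod (fun i _ => by positivity)
      fun i _ => pow_le_exp_pow_mul_descFactorial (hqn i)
  refine ⟨?_, ?_, ?_⟩
  · exact (Nat.mul_le_mul_left _ x1).trans (h ▸ Nat.mul_le_mul_left _ y2)
  · exact (Nat.mul_le_mul_left _ y1).trans (h ▸ Nat.mul_le_mul_left _ x2)
  · have h' : (numExt c m (restrictPairs τ S) : ℝ) * ∏ i, (n.descFactorial (q i) : ℝ) =
        numExt c m id * ∏ e, ((D e).descFactorial (p e) : ℝ) := by exact_mod_cast h
    have x2' : ∏ e, ((D e).descFactorial (p e) : ℝ) ≤ m ^ k := by exact_mod_cast x2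
    calc (numExt c m (restrictPairs τ S) : ℝ) * n ^ (2 * k)
        ≤ numExt c m (restrictPairs τ S) *
          (Real.exp 1 ^ (2 * k) * ∏ i, (n.descFactorial (q i) : ℝ)) := by gcongr
      _ = Real.exp 1 ^ (2 * k) *
          (numExt c m id * ∏ e, ((D e).descFactorial (p e) : ℝ)) := by rw [← h']; ring
      _ ≤ Real.exp 1 ^ (2 * k) * (numExt c m id * m ^ k) := by gcongr
      _ = _ := by ring

end AvoidingCount

section Asymptotics

lemma tendsto_natCast_sub_div {x : ℕ → ℕ} {a : ℝ} (hx : ∀ m, (x m : ℝ) = a * m) (K : ℕ) :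
    Tendsto (fun m : ℕ => ((x m - K : ℕ) : ℝ) / m) atTop (𝓝 a) := by
  have h1 : Tendsto (fun m : ℕ => a - (K : ℝ) / m) atTop (𝓝 a) := by
    simpa using tendsto_const_nhds.sub (tendsto_const_div_atTop_nhds_zero_nat (K : ℝ))
  refine tendsto_of_tendsto_of_tendsto_of_le_of_le' h1 tendsto_const_nhds ?_ ?_
  · filter_upwards [eventually_gt_atTop 0] with m hm
    have hm : (0 : ℝ) < m := by exact_mod_cast hm
    have h2 : (x m : ℝ) ≤ (x m - K : ℕ) + K := by
      exact_mod_cast (by omega : x m ≤ x m - K + K)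
    rw [le_div_iff₀ hm, sub_mul, div_mul_cancel₀ _ hm.ne', ← hx]
    linarith
  · filter_upwards [eventually_gt_atTop 0] with m hm
    have hm : (0 : ℝ) < m := by exact_mod_cast hm
    rw [div_le_iff₀ hm, ← hx]
    exact_mod_cast Nat.sub_le _ _

lemma tendsto_choose_div_pow {h : ℕ → ℕ} {L : ℝ} (hh : ∀ m, (h m : ℝ) = L * m) (k : ℕ) :
    Tendsto (fun m : ℕ => ((h m).choose k : ℝ) / (m : ℝ) ^ k) atTop (𝓝 (L ^ k / k !)) := by
  have h1 : Tendsto (fun m : ℕ => (((h m - k : ℕ) : ℝ) / m) ^ k / k !) atTop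
      (𝓝 (L ^ k / k !)) := ((tendsto_natCast_sub_div hh k).pow k).div_const _
  refine tendsto_of_tendsto_of_tendsto_of_le_of_le' h1 tendsto_const_nhds ?_ ?_
  · filter_upwards with m
    have h2 : (((h m - k : ℕ) : ℝ)) ^ k / k ! ≤ (h m).choose k := by
      refine le_trans ?_ (Nat.pow_le_choose k (h m))
      gcongr
      omega
    rw [div_pow, div_right_comm]
    gcongr
  · filter_upwards [eventually_gt_atTop 0] with m hm
    have hm : (0 : ℝ) < m := by exact_mod_cast hm
    rw [div_le_iff₀ (by positivity)]
    refine (Nat.choose_le_pow_div k (h m)).trans_eq ?_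
    rw [hh, mul_pow]
    ring

lemma tendsto_alternating_sum {B : ℕ → ℕ → ℝ} {h : ℕ → ℕ} {L : ℝ} {s : ℕ} (hs : 0 < s)
    (hh : ∀ m, (h m : ℝ) = L * m) (hB : ∀ m k, 0 ≤ B m k)
    (hB0 : ∀ m k, h m < k → B m k = 0)
    (lower : ∀ m k, ((h m).choose k : ℝ) * ((m - k : ℕ) : ℝ) ^ k ≤
      B m k * ((s * m : ℕ) : ℝ) ^ (2 * k))
    (upper : ∀ m k, B m k * ((s * m - 2 * k : ℕ) : ℝ) ^ (2 * k) ≤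
      ((h m).choose k : ℝ) * (m : ℝ) ^ k)
    (bound : ∀ m k, B m k * ((s * m : ℕ) : ℝ) ^ (2 * k) ≤
      ((h m).choose k : ℝ) * ((m : ℝ) ^ k * Real.exp 1 ^ (2 * k))) :
    Tendsto (fun m => ∑ k ∈ Finset.range (h m + 1), (-1) ^ k * B m k) atTop
      (𝓝 (Real.exp (-(L / s ^ 2)))) := by
  have hs' : (0 : ℝ) < s := by exact_mod_cast hs
  have lim : ∀ k, Tendsto (fun m => B m k) atTop (𝓝 ((L / s ^ 2) ^ k / k !)) := by
    intro k
    have c1 := tendsto_choose_div_pow hh k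
    have c2 := (tendsto_natCast_sub_div (x := fun m => m) (a := 1) (by simp) k).pow k
    have c3 := (tendsto_natCast_sub_div (x := fun m => s * m) (a := s) (by simp) (2 * k)).pow
      (2 * k)
    have l1 := (c1.mul c2).div_const ((s : ℝ) ^ (2 * k))
    have u1 := c1.div c3 (by positivity)
    have e1 : L ^ k / k ! * 1 ^ k / (s : ℝ) ^ (2 * k) = (L / s ^ 2) ^ k / k ! := by
      rw [div_pow, one_pow, mul_one, ← pow_mul, div_right_comm]
    have e2 : L ^ k / k ! / (s : ℝ) ^ (2 * k) = (L / s ^ 2) ^ k / k ! := by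
      rw [div_pow, ← pow_mul, div_right_comm]
    rw [e1] at l1
    rw [e2] at u1
    refine tendsto_of_tendsto_of_tendsto_of_le_of_le' l1 u1 ?_ ?_
    · filter_upwards [eventually_gt_atTop 0] with m hm
      have hm : (0 : ℝ) < m := by exact_mod_cast hm
      have := lower m k
      push_cast at this
      rw [div_pow, _root_.div_mul_div_comm, div_div, div_le_iff₀ (by positivity)]
      refine this.trans_eq ?_
      ring
    · filter_upwards [eventually_gt_atTop (2 * k)] with m hm
      have hm0 : (0 : ℝ) < m := by exact_mod_cast (Nat.zero_le _).trans_lt hm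
      have hp : (0 : ℝ) < ((s * m - 2 * k : ℕ) : ℝ) := by
        have : m ≤ s * m := Nat.le_mul_of_pos_left m hs
        exact_mod_cast (by omega : 0 < s * m - 2 * k)
      have := upper m k
      simp only [Pi.div_apply]
      rw [div_pow, div_div_div_eq, le_div_iff₀ (by positivity)]
      calc B m k * ((m : ℝ) ^ k * ((s * m - 2 * k : ℕ) : ℝ) ^ (2 * k))
          = (m : ℝ) ^ k * (B m k * ((s * m - 2 * k : ℕ) : ℝ) ^ (2 * k)) := by ring
        _ ≤ (m : ℝ) ^ k * (((h m).choose k : ℝ) * (m : ℝ) ^ k) := by gcongr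
        _ = _ := by ring
  have dom : ∀ᶠ m in atTop, ∀ k, ‖(-1) ^ k * B m k‖ ≤
      (L * Real.exp 1 ^ 2 / s ^ 2) ^ k / k ! := by
    filter_upwards [eventually_gt_atTop 0] with m hm k
    have hm : (0 : ℝ) < m := by exact_mod_cast hm
    rw [norm_mul, norm_pow, norm_neg, norm_one, one_pow, one_mul, Real.norm_of_nonneg (hB m k)]
    have h1 := bound m k
    have h2 : (((h m).choose k : ℕ) : ℝ) ≤ (L * m) ^ k / k ! := by
      rw [← hh]
      exact Nat.choose_le_pow_div k (h m)
    push_cast at h1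
    have hp : (0 : ℝ) < (s * m : ℝ) ^ (2 * k) := by positivity
    refine le_of_mul_le_mul_right ?_ hp
    calc B m k * (s * m : ℝ) ^ (2 * k)
        ≤ (L * m) ^ k / k ! * ((m : ℝ) ^ k * Real.exp 1 ^ (2 * k)) := by
          refine h1.trans ?_
          gcongr
      _ = _ := by
          rw [div_pow, mul_pow, mul_pow, mul_pow, ← pow_mul, ← pow_mul]
          field_simp
          ring
  have key := tendsto_tsum_of_dominated_convergence (Real.summable_pow_div_factorial _)
    (fun k => (lim k).const_mul ((-1) ^ k)) dom
  have e1 : ∑' k : ℕ, (-1) ^ k * ((L / (s : ℝ) ^ 2) ^ k / k !) =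
      Real.exp (-(L / s ^ 2)) := by
    rw [Real.exp_eq_exp_ℝ, NormedSpace.exp_eq_tsum_div]
    refine tsum_congr fun k => ?_
    rw [neg_pow (L / (s : ℝ) ^ 2) k]
    ring
  rw [e1] at key
  refine key.congr fun m => ?_
  refine tsum_eq_sum fun k hk => ?_
  rw [hB0 m k (by simpa using hk), mul_zero]

end Asymptotics

section PerfectMatchings

variable {ι : Type} {β : ι → Type}

/-- The subgraph whose edges are the pairs of an involution. -/
def SimpleGraph.ofInvolution (G : SimpleGraph (Σ i, β i)) {σ : (Σ i, β i) → Σ i, β i}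
    (hσ : Function.Involutive σ) (hG : ∀ u, G.Adj u (σ u)) : G.Subgraph where
  verts := Set.univ
  Adj u v := σ u = v
  adj_sub := by
    rintro u v rfl
    exact hG u
  edge_vert _ := Set.mem_univ _
  symm := ⟨by
    rintro u v rfl
    exact hσ u⟩

lemma SimpleGraph.Subgraph.IsPerfectMatching.exists_involutive {V : Type} {G : SimpleGraph V}
    {M : G.Subgraph} (hM : M.IsPerfectMatching) :
    ∃ σ : V → V, Function.Involutive σ ∧ ∀ u v, M.Adj u v ↔ σ u = v := by
  rw [SimpleGraph.Subgraph.isPerfectMatching_iff] at hM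
  choose σ hσ huniq using hM
  have key : ∀ u v, M.Adj u v ↔ σ u = v :=
    fun u v => ⟨fun h => (huniq u v h).symm, fun h => h ▸ hσ u⟩
  exact ⟨σ, fun u => (key _ _).1 (hσ u).symm, key⟩

variable [Fintype (Σ i, β i)] [DecidableEq ι]

lemma crossCount_eq_card {G : SimpleGraph (Σ i, β i)} {M : G.Subgraph}
    {σ : (Σ i, β i) → Σ i, β i} (hσ : ∀ u v, M.Adj u v ↔ σ u = v) (i j : ι) :
    crossCount M i j = Finset.card {u | u.1 = i ∧ (σ u).1 = j} := by
  rw [← Set.ncard_coe_finset, ← Set.ncard_image_of_injective (f := fun u => (u, σ u)) _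
    fun u v h => (Prod.ext_iff.1 h).1]
  unfold crossCount
  congr 1
  ext ⟨u, v⟩
  simp only [hσ, Set.mem_ofPred_eq, Set.mem_image, Finset.coe_filter, Finset.mem_univ, true_and,
    Prod.mk.injEq]
  constructor
  · rintro ⟨h1, h2, h3⟩
    exact ⟨u, ⟨h1, h3 ▸ h2⟩, rfl, h3⟩
  · rintro ⟨w, ⟨h1, h2⟩, rfl, rfl⟩
    exact ⟨h1, h2, rfl⟩

lemma bpmCount_eq_card (G : SimpleGraph (Σ i, β i)) (m : ℕ)
    {F : Finset ((Σ i, β i) → Σ i, β i)}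
    (hF : ∀ σ, σ ∈ F ↔ Function.Involutive σ ∧ (∀ u, G.Adj u (σ u)) ∧
      ∀ i j, i ≠ j → Finset.card {u | u.1 = i ∧ (σ u).1 = j} = m) :
    bpmCount G m = F.card := by
  rw [← Set.ncard_coe_finset]
  unfold bpmCount
  symm
  refine Set.ncard_congr
    (fun σ hσ => G.ofInvolution ((hF σ).1 hσ).1 ((hF σ).1 hσ).2.1) ?_ ?_ ?_
  · intro σ hσ
    refine ⟨SimpleGraph.Subgraph.isPerfectMatching_iff.2 fun u => ⟨σ u, rfl, fun v h => Eq.symm (a := σ u) h⟩,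
      fun i j hij => ?_⟩
    rw [crossCount_eq_card (σ := σ) fun _ _ => Iff.rfl]
    exact ((hF σ).1 hσ).2.2 i j hij
  · intro σ σ' _ _ h
    have h := congrArg SimpleGraph.Subgraph.Adj h
    ext1 u
    have h1 : (σ u = σ' u) = (σ' u = σ' u) := congrFun (congrFun h u) (σ' u)
    rw [h1]
  · rintro M ⟨hM, hbal⟩
    obtain ⟨σ, hinv, hadj⟩ := hM.exists_involutive
    refine ⟨σ, (hF σ).2 ⟨hinv, fun u => M.adj_sub ((hadj _ _).2 rfl), fun i j hij => ?_⟩, ?_⟩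
    · rw [← crossCount_eq_card hadj]
      exact hbal i j hij
    · refine SimpleGraph.Subgraph.ext ?_ ?_
      · exact (Set.eq_univ_of_forall hM.2).symm
      · ext u v
        exact (hadj u v).symm

end PerfectMatchings

section CompleteMultipartite

/-- The number of edges a balanced perfect matching has in each pair of classes. -/
def balancedWeight (r m : ℕ) : Sym2 (Fin r) → ℕ := fun e => if e.IsDiag then 0 else m

lemma card_class (r n : ℕ) (i : Fin r) :
    Finset.card {u : Σ _ : Fin r, Fin n | u.1 = i} = n := by
  have : ({u : Σ _ : Fin r, Fin n | u.1 = i} : Finset _) =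
      Finset.univ.map ⟨Sigma.mk i, sigma_mk_injective⟩ := by
    ext ⟨j, x⟩
    simp only [Finset.mem_filter, Finset.mem_univ, true_and, Finset.mem_map,
      Function.Embedding.coeFn_mk]
    constructor
    · rintro rfl
      exact ⟨x, rfl⟩
    · rintro ⟨y, hy⟩
      exact (congrArg Sigma.fst hy).symm
  rw [this, Finset.card_map, Finset.card_univ, Fintype.card_fin]

lemma isPartial_id (r m : ℕ) :
    IsPartial (Sigma.fst : (Σ _ : Fin r, Fin ((r - 1) * m)) → Fin r) m id
      (balancedWeight r m) := by
  refine ⟨fun _ => rfl, fun _ _ => rfl, fun i j hij => ?_, fun i => by simp [balancedWeight],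
    fun i => ?_⟩
  · have : ({u | u.1 = i ∧ (id u).1 = j} : Finset (Σ _ : Fin r, Fin ((r - 1) * m))) = ∅ := by
      rw [Finset.filter_eq_empty_iff]
      rintro u - ⟨h1, h2⟩
      exact hij (h1.symm.trans h2)
    rw [this]
    simp [balancedWeight, hij]
  · simp only [id, and_true, card_class, balancedWeight, Sym2.mk_isDiag_iff]
    simp only [← ite_not (p := _ = _), Finset.sum_ite, Finset.sum_const_zero, add_zero,
      Finset.sum_const, smul_eq_mul]
    simp [Finset.filter_ne, Finset.card_erase_of_mem]

end CompleteMultipartite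

/-- For fixed `r ≥ 3` and any sequence of balanced perfect matchings `M m` of the
complete `r`-partite graph with classes of size `(r-1)m`, the proportion of balanced
perfect matchings avoiding `M m` tends to `e^{-r/(2r-2)}` as `m → ∞`. -/
theorem stmt_13 (r : ℕ) (hr : 3 ≤ r)
    (M : ∀ m : ℕ,
      (completeMultipartiteGraph (fun _ : Fin r => Fin ((r - 1) * m))).Subgraph)
    (hM : ∀ m, (M m).IsPerfectMatching)
    (hbal : ∀ m, ∀ i j : Fin r, i ≠ j → crossCount (M m) i j = m) :
    Tendsto
      (fun m : ℕ =>
        (bpmCount (completeMultipartiteGraph (fun _ : Fin r => Fin ((r - 1) * m)) \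
            (M m).spanningCoe) m : ℝ) /
          (bpmCount (completeMultipartiteGraph (fun _ : Fin r => Fin ((r - 1) * m))) m : ℝ))
      atTop (𝓝 (Real.exp (-(r : ℝ) / (2 * (r : ℝ) - 2)))) := by
  classical
  choose τ hinv hadj using fun m => (hM m).exists_involutive
  let c : ∀ m, (Σ _ : Fin r, Fin ((r - 1) * m)) → Fin r := fun m => Sigma.fst
  have hτ : ∀ m, IsBalanced (c m) m (τ m) := fun m =>
    ⟨hinv m, fun u => ((M m).adj_sub ((hadj m u _).2 rfl)).symm,
      fun i j hij => (crossCount_eq_card (hadj m) i j).symm.trans (hbal m i j hij)⟩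
  let h : ℕ → ℕ := fun m => (lowerEnds (c m) (τ m)).card
  let N : ℕ → ℕ := fun m => numExt (c m) m id
  have hw : ∀ m e, balancedWeight r m e = 0 ∨ balancedWeight r m e = m := fun m e => by
    unfold balancedWeight
    split_ifs <;> simp
  have hNpos : ∀ m, (0 : ℝ) < N m := fun m => by
    have h1 := (isPartial_id r m).numExt_mul
    have h2 : 0 < numExt (c m) m id := by
      refine Nat.pos_of_ne_zero fun h0 => ?_
      change numExt Sigma.fst m id = 0 at h0
      rw [h0, zero_mul] at h1
      exact (Finset.prod_pos fun i _ => Nat.factorial_pos _).ne h1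
    exact_mod_cast h2
  let A : ℕ → ℕ → ℝ := fun m k =>
    ∑ S ∈ Finset.powersetCard k (lowerEnds (c m) (τ m)),
      (numExt (c m) m (restrictPairs (τ m) S) : ℝ)
  have hden : ∀ m, bpmCount (completeMultipartiteGraph
      (fun _ : Fin r => Fin ((r - 1) * m))) m = N m := fun m => by
    refine bpmCount_eq_card _ _ fun σ => ?_
    simp only [Finset.mem_filter, Finset.mem_univ, true_and]
    constructor
    · rintro ⟨⟨h1, h2, h3⟩, -⟩
      exact ⟨h1, fun u => (h2 u).symm, h3⟩
    · rintro ⟨h1, h2, h3⟩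
      exact ⟨⟨h1, fun u => (h2 u).symm, h3⟩, fun u hu => absurd rfl hu⟩
  have hnum : ∀ m, (bpmCount (completeMultipartiteGraph (fun _ : Fin r => Fin ((r - 1) * m)) \
      (M m).spanningCoe) m : ℝ) = ∑ k ∈ Finset.range (h m + 1), (-1) ^ k * A m k := fun m => by
    rw [bpmCount_eq_card (F := {σ | IsBalanced (c m) m σ ∧ ∀ u, σ u ≠ τ m u})]
    · have := card_avoiding (hτ m) (F := {σ | IsBalanced (c m) m σ ∧ ∀ u, σ u ≠ τ m u})
        (by simp)
      have := congrArg (Int.cast : ℤ → ℝ) this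
      push_cast at this
      exact this
    · intro σ
      simp only [Finset.mem_filter, Finset.mem_univ, true_and, SimpleGraph.sdiff_adj,
        SimpleGraph.Subgraph.spanningCoe_adj, hadj]
      constructor
      · rintro ⟨⟨h1, h2, h3⟩, h4⟩
        exact ⟨h1, fun u => ⟨(h2 u).symm, fun h => h4 u h.symm⟩, h3⟩
      · rintro ⟨h1, h2, h3⟩
        exact ⟨⟨h1, fun u => (h2 u).1.symm, h3⟩, fun u h => (h2 u).2 h.symm⟩
  have hr1 : ((r - 1 : ℕ) : ℝ) = r - 1 := by
    rw [Nat.cast_sub (by omega)]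
    simp
  have hr3 : (3 : ℝ) ≤ r := by exact_mod_cast hr
  have hh : ∀ m, (h m : ℝ) = (r * (r - 1) / 2 : ℝ) * m := fun m => by
    have h1 : 2 * h m = r * ((r - 1) * m) := by
      have := two_mul_card_lowerEnds (hτ m)
      simpa using this
    have h2 : (2 : ℝ) * h m = r * (((r - 1 : ℕ) : ℝ) * m) := by exact_mod_cast h1
    rw [hr1] at h2
    linarith
  have hA : ∀ m k (x y : ℝ), (∀ S ⊆ lowerEnds (c m) (τ m), S.card = k →
      (numExt (c m) m (restrictPairs (τ m) S) : ℝ) * x ≤ N m * y) →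
      A m k / N m * x ≤ (h m).choose k * y := fun m k x y hS => by
    rw [div_mul_eq_mul_div, div_le_iff₀ (hNpos m), Finset.sum_mul]
    refine (Finset.sum_le_card_nsmul _ _ (N m * y) fun S hS' => ?_).trans_eq ?_
    · exact hS S (Finset.mem_powersetCard.1 hS').1 (Finset.mem_powersetCard.1 hS').2
    · rw [Finset.card_powersetCard, nsmul_eq_mul]
      ring
  have hA' : ∀ m k (x y : ℝ), (∀ S ⊆ lowerEnds (c m) (τ m), S.card = k →
      N m * y ≤ (numExt (c m) m (restrictPairs (τ m) S) : ℝ) * x) →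
      (h m).choose k * y ≤ A m k / N m * x := fun m k x y hS => by
    have := hA m k (-x) (-y) fun S h1 h2 => by
      have := hS S h1 h2
      linarith
    linarith
  have bounds := fun m k S (hS : S ⊆ lowerEnds (c m) (τ m)) (hk : S.card = k) =>
    numExt_restrictPairs_bounds (hτ m) (isPartial_id r m) (hw m) (card_class r _) hS hk
  have key := tendsto_alternating_sum (B := fun m k => A m k / N m) (s := r - 1) (by omega) hh (fun m k => by positivity)
    (fun m k hk => by
      simp only [A]
      rw [Finset.powersetCard_eq_empty.2 hk]
      simp)
    (fun m k => hA' m k _ _ fun S hS hk => by exact_mod_cast (bounds m k S hS hk).1)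
    (fun m k => hA m k _ _ fun S hS hk => by exact_mod_cast (bounds m k S hS hk).2.1)
    (fun m k => hA m k _ _ fun S hS hk => by
      have := (bounds m k S hS hk).2.2
      rw [mul_assoc] at this
      exact this)
  have e1 : -(r : ℝ) / (2 * r - 2) = -((r * (r - 1) / 2 : ℝ) / ((r - 1 : ℕ) : ℝ) ^ 2) := by
    rw [hr1]
    have h1 : (r : ℝ) - 1 ≠ 0 := by linarith
    have h2 : (2 : ℝ) * r - 2 ≠ 0 := by linarith
    field_simp
  rw [e1]
  refine key.congr fun m => ?_
  rw [hnum, hden, Finset.sum_div]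
  exact Finset.sum_congr rfl fun k _ => by ring
end

section
/- Let d be a fixed nonnegative integer and (G_{2n}) a sequence of (2n-d-1)-regular graphs on 2n vertices. Then pm(G_{2n}) / pm(K_{2n}) → e^{-d/2} as n → ∞. -/
open SimpleGraph Filter Topology

section Matchings

open Finset

theorem card_filter_mem_of_subset {V : Type} [DecidableEq V] {S : Finset V} {e : Sym2 V} (he : ¬ e.IsDiag)
    (heS : ∀ v ∈ e, v ∈ S) : #{v ∈ S | v ∈ e} = 2 := by
  induction e with | _ a b =>
  have : ({v ∈ S | v ∈ s(a, b)} : Finset V) = {a, b} := by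
    ext v
    simp only [mem_filter, mem_insert, mem_singleton, Sym2.mem_iff]
    refine ⟨fun h => h.2, fun h => ⟨heS v (by simpa using h), h⟩⟩
  rw [this, card_pair (by simpa using he)]

theorem card_filter_notMem_add_two {V : Type} [DecidableEq V] {S : Finset V} {e : Sym2 V} (he : ¬ e.IsDiag)
    (heS : ∀ v ∈ e, v ∈ S) : #{v ∈ S | v ∉ e} + 2 = #S := by
  rw [← card_filter_add_card_filter_not (s := S) (fun v => v ∈ e),
    card_filter_mem_of_subset he heS, add_comm]

variable {V : Type} [Fintype V] [DecidableEq V]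

/-- The perfect matchings of the complete graph on the vertex set `S`, as sets of edges. -/
def matchingsOn (S : Finset V) : Finset (Finset (Sym2 V)) :=
  {M | (∀ e ∈ M, ¬ e.IsDiag) ∧ ∀ v, #{e ∈ M | v ∈ e} = if v ∈ S then 1 else 0}

/-- The edges of `T` that join two distinct vertices of `S`. -/
def edgesWithin (T : Finset (Sym2 V)) (S : Finset V) : Finset (Sym2 V) :=
  {e ∈ T | ¬ e.IsDiag ∧ ∀ v ∈ e, v ∈ S}

theorem mem_edgesWithin {T : Finset (Sym2 V)} {S : Finset V} {e : Sym2 V} :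
    e ∈ edgesWithin T S ↔ e ∈ T ∧ ¬ e.IsDiag ∧ ∀ v ∈ e, v ∈ S := by
  simp [edgesWithin]

theorem mem_matchingsOn {S : Finset V} {M : Finset (Sym2 V)} :
    M ∈ matchingsOn S ↔
      (∀ e ∈ M, ¬ e.IsDiag) ∧ ∀ v, #{e ∈ M | v ∈ e} = if v ∈ S then 1 else 0 := by
  simp [matchingsOn]

theorem subset_of_mem_matchingsOn {S : Finset V} {M : Finset (Sym2 V)} (hM : M ∈ matchingsOn S)
    {e : Sym2 V} (he : e ∈ M) {v : V} (hv : v ∈ e) : v ∈ S := by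
  by_contra h
  have := (mem_matchingsOn.1 hM).2 v
  rw [if_neg h, card_eq_zero] at this
  have h2 : e ∈ ({e ∈ M | v ∈ e} : Finset _) := by simp [he, hv]
  simp [this] at h2

theorem insert_mem_matchingsOn {S : Finset V} {M : Finset (Sym2 V)} {e : Sym2 V}
    (heM : e ∉ M) (he : ¬ e.IsDiag) (heS : ∀ v ∈ e, v ∈ S) :
    insert e M ∈ matchingsOn S ↔ M ∈ matchingsOn {v ∈ S | v ∉ e} := by
  simp only [mem_matchingsOn, mem_insert, forall_eq_or_imp, he, not_false_iff, true_and]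
  refine and_congr_right fun _ => forall_congr' fun v => ?_
  rw [filter_insert]
  by_cases hv : v ∈ e
  · have := heS v hv
    rw [if_pos hv, card_insert_of_notMem (by simp [heM])]
    simp [hv, this]
  · simp [hv]

theorem notMem_of_mem_matchingsOn_filter {S : Finset V} {M : Finset (Sym2 V)} {e : Sym2 V}
    (hM : M ∈ matchingsOn {v ∈ S | v ∉ e}) : e ∉ M := by
  intro he
  induction e with | _ a b =>
  have := subset_of_mem_matchingsOn hM he (Sym2.mem_mk_left a b)
  simp at this

/-- Removing an edge from a matching, summed over all choices of matching and edge. -/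
theorem sum_matchingsOn_erase (S : Finset V) (T : Finset (Sym2 V))
    (f : Finset (Sym2 V) → ℕ) :
    ∑ M ∈ matchingsOn S, ∑ e ∈ M ∩ T, f (M.erase e) =
      ∑ e ∈ edgesWithin T S, ∑ M ∈ matchingsOn {v ∈ S | v ∉ e}, f M := by
  rw [sum_sigma', sum_sigma']
  refine sum_bij' (fun x _ => ⟨x.2, x.1.erase x.2⟩) (fun x _ => ⟨insert x.1 x.2, x.1⟩)
    ?_ ?_ ?_ ?_ ?_
  · rintro ⟨M, e⟩ h
    simp only [mem_sigma, mem_inter] at h ⊢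
    obtain ⟨hM, heM, heT⟩ := h
    have hd := (mem_matchingsOn.1 hM).1 e heM
    have hS : ∀ v ∈ e, v ∈ S := fun v hv => subset_of_mem_matchingsOn hM heM hv
    refine ⟨mem_edgesWithin.2 ⟨heT, hd, hS⟩, ?_⟩
    rw [← insert_mem_matchingsOn (notMem_erase e M) hd hS, insert_erase heM]
    exact hM
  · rintro ⟨e, M⟩ h
    simp only [mem_sigma, mem_inter] at h ⊢
    obtain ⟨he, hM⟩ := h
    obtain ⟨heT, hd, hS⟩ := mem_edgesWithin.1 he
    exact ⟨(insert_mem_matchingsOn (notMem_of_mem_matchingsOn_filter hM) hd hS).2 hM,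
      mem_insert_self _ _, heT⟩
  · rintro ⟨M, e⟩ h
    simp only [mem_sigma, mem_inter] at h
    simp [insert_erase h.2.1]
  · rintro ⟨e, M⟩ h
    simp only [mem_sigma] at h
    simp [erase_insert (notMem_of_mem_matchingsOn_filter h.2)]
  · rintro ⟨M, e⟩ h
    rfl

theorem card_edgesWithin_mem {S : Finset V} {v : V} (hv : v ∈ S) :
    #(edgesWithin ({e | v ∈ e} : Finset (Sym2 V)) S) + 1 = #S := by
  have : edgesWithin ({e | v ∈ e} : Finset (Sym2 V)) S = (S.erase v).image (fun u => s(v, u)) := by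
    ext e
    simp only [mem_edgesWithin, mem_filter, mem_univ, true_and, mem_image, mem_erase]
    constructor
    · rintro ⟨⟨u, rfl⟩, hd, hS⟩
      exact ⟨u, ⟨fun h => hd (by simp [h]), hS u (by simp)⟩, rfl⟩
    · rintro ⟨u, ⟨huv, hu⟩, rfl⟩
      refine ⟨by simp, by simpa using huv.symm, ?_⟩
      simp [hv, hu]
  rw [this, card_image_of_injective, card_erase_add_one hv]
  exact fun a b h => Sym2.congr_right.1 h

theorem card_matchingsOn (m : ℕ) : ∀ S : Finset V, #S = 2 * m →
    #(matchingsOn S) = ∏ i ∈ range m, (2 * i + 1) := by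
  induction m with
  | zero =>
    intro S hS
    obtain rfl : S = ∅ := by simpa using hS
    have : matchingsOn (∅ : Finset V) = {∅} := by
      ext M
      rw [mem_singleton]
      constructor
      · intro h
        refine eq_empty_of_forall_notMem fun e he => ?_
        induction e with | _ a b =>
        simpa using subset_of_mem_matchingsOn h he (Sym2.mem_mk_left a b)
      · rintro rfl
        simp [mem_matchingsOn]
    simp [this]
  | succ m ih =>
    intro S hS
    obtain ⟨v, hv⟩ : S.Nonempty := card_pos.1 (by omega)
    have h := sum_matchingsOn_erase S {e | v ∈ e} (fun _ => 1)
    have h1 : ∀ M ∈ matchingsOn S, ∑ e ∈ M ∩ ({e | v ∈ e} : Finset (Sym2 V)), 1 = 1 := by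
      intro M hM
      have := (mem_matchingsOn.1 hM).2 v
      rw [if_pos hv] at this
      rw [sum_const, smul_eq_mul, mul_one, ← this]
      congr 1
      ext e
      simp
    have h2 : ∀ e ∈ edgesWithin ({e | v ∈ e} : Finset (Sym2 V)) S,
        ∑ M ∈ matchingsOn {v ∈ S | v ∉ e}, 1 = ∏ i ∈ range m, (2 * i + 1) := by
      intro e he
      obtain ⟨-, hd, he⟩ := mem_edgesWithin.1 he
      have := card_filter_notMem_add_two hd he
      rw [sum_const, smul_eq_mul, mul_one, ih _ (by omega)]
    have h3 := card_edgesWithin_mem hv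
    rw [sum_congr rfl h1, sum_congr rfl h2, sum_const, sum_const, smul_eq_mul, mul_one,
      smul_eq_mul] at h
    rw [h, prod_range_succ, mul_comm, show #(edgesWithin ({e | v ∈ e} : Finset (Sym2 V)) S)
      = 2 * m + 1 by omega]

/-- The `k`-th binomial moment of the number of edges in `T` of a perfect matching on `S`,
not normalized. -/
def binomialMoment (T : Finset (Sym2 V)) (k : ℕ) (S : Finset V) : ℕ :=
  ∑ M ∈ matchingsOn S, (#(M ∩ T)).choose k

theorem binomialMoment_zero (T : Finset (Sym2 V)) {S : Finset V} {m : ℕ} (hS : #S = 2 * m) :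
    binomialMoment T 0 S = ∏ i ∈ range m, (2 * i + 1) := by
  simp [binomialMoment, card_matchingsOn m S hS]

theorem succ_mul_binomialMoment_succ (T : Finset (Sym2 V)) (k : ℕ) (S : Finset V) :
    (k + 1) * binomialMoment T (k + 1) S =
      ∑ e ∈ edgesWithin T S, binomialMoment T k {v ∈ S | v ∉ e} := by
  unfold binomialMoment
  rw [← sum_matchingsOn_erase S T (fun M => (#(M ∩ T)).choose k), mul_sum]
  refine sum_congr rfl fun M _ => ?_
  have : ∀ e ∈ M ∩ T, (#(M.erase e ∩ T)).choose k = (#(M ∩ T) - 1).choose k := by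
    intro e he
    rw [erase_inter, card_erase_of_mem he]
  rw [sum_congr rfl this, sum_const, smul_eq_mul]
  rcases Nat.eq_zero_or_pos #(M ∩ T) with h | h
  · simp [h]
  · obtain ⟨x, hx⟩ := Nat.exists_eq_succ_of_ne_zero h.ne'
    rw [hx, Nat.succ_sub_one, Nat.succ_eq_add_one, Nat.add_one_mul_choose_eq, mul_comm]

variable (H : SimpleGraph V) [DecidableRel H.Adj] {d : ℕ}

theorem card_edgesWithin_edgeFinset_le (hH : H.IsRegularOfDegree d) {S : Finset V} {m : ℕ}
    (hS : #S = 2 * m) : #(edgesWithin H.edgeFinset S) ≤ d * m := by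
  have h1 : ∑ v ∈ S, #{e ∈ edgesWithin H.edgeFinset S | v ∈ e} =
      ∑ e ∈ edgesWithin H.edgeFinset S, #{v ∈ S | v ∈ e} :=
    sum_card_bipartiteAbove_eq_sum_card_bipartiteBelow (fun v e => v ∈ e)
  have h2 : ∀ e ∈ edgesWithin H.edgeFinset S, #{v ∈ S | v ∈ e} = 2 := fun e he =>
    card_filter_mem_of_subset (mem_edgesWithin.1 he).2.1 (mem_edgesWithin.1 he).2.2
  have h3 : ∀ v ∈ S, #{e ∈ edgesWithin H.edgeFinset S | v ∈ e} ≤ d := by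
    intro v _
    rw [← hH.degree_eq v, ← card_incidenceFinset_eq_degree]
    refine card_le_card fun e he => ?_
    rw [mem_filter, mem_edgesWithin, mem_edgeFinset] at he
    exact (H.mem_incidenceFinset v e).2 ⟨he.1.1, he.2⟩
  rw [sum_congr rfl h2, sum_const, smul_eq_mul] at h1
  have h4 := sum_le_card_nsmul S _ d h3
  rw [h1, hS, smul_eq_mul] at h4
  nlinarith

theorem le_card_edgesWithin_edgeFinset (hH : H.IsRegularOfDegree d) {S : Finset V} {m r : ℕ}
    (hS : #S = 2 * m) (hV : Fintype.card V = 2 * m + 2 * r) :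
    d * (m - r) ≤ #(edgesWithin H.edgeFinset S) := by
  have h1 : H.edgeFinset ⊆ edgesWithin H.edgeFinset S ∪ Sᶜ.biUnion (H.incidenceFinset ·) := by
    intro e he
    rw [mem_union, mem_edgesWithin, mem_biUnion]
    by_cases h : ∀ v ∈ e, v ∈ S
    · exact Or.inl ⟨he, H.not_isDiag_of_mem_edgeFinset he, h⟩
    · push Not at h
      obtain ⟨v, hv, hvS⟩ := h
      exact Or.inr ⟨v, by simpa using hvS,
        (H.mem_incidenceFinset v e).2 ⟨mem_edgeFinset.1 he, hv⟩⟩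
  have h2 : #(Sᶜ.biUnion (H.incidenceFinset ·)) ≤ #Sᶜ * d :=
    card_biUnion_le_card_mul _ _ _ fun v _ => by
      rw [card_incidenceFinset_eq_degree, hH.degree_eq v]
  have h3 := (card_le_card h1).trans (card_union_le _ _)
  have h4 := H.sum_degrees_eq_twice_card_edges
  simp only [hH.degree_eq, sum_const, card_univ, smul_eq_mul, hV] at h4
  have h5 : #Sᶜ = 2 * r := by rw [card_compl, hV, hS]; omega
  rw [h5] at h2
  rw [Nat.mul_sub]
  have : d * m + d * r = #H.edgeFinset := by nlinarith
  have : 2 * r * d = d * r + d * r := by ring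
  omega

end Matchings

section Bounds

open Finset

/-- The common shape of the bounds on the normalized binomial moments: with `s = 0` and `r = 0`
an upper bound, with `s = 1` a lower bound for sets missing `2 * r` vertices. -/
noncomputable def momentBound (d s : ℕ) : ℕ → ℕ → ℕ → ℝ
  | 0, _, _ => 1
  | k + 1, m, r =>
    (d * (m - r : ℕ) / (2 * m - 1) / (k + 1)) * momentBound d s k (m - 1) (r + s)

theorem momentBound_nonneg (d s k : ℕ) : ∀ m r, 0 ≤ momentBound d s k m r := by
  induction k with
  | zero => intro m r; simp [momentBound]
  | succ k ih =>
    intro m r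
    rw [momentBound]
    refine mul_nonneg ?_ (ih _ _)
    rcases m with _ | m
    · simp
    · have : (0 : ℝ) ≤ 2 * ((m + 1 : ℕ) : ℝ) - 1 := by push_cast; linarith [m.cast_nonneg (α := ℝ)]
      positivity

theorem momentBound_le (d k : ℕ) : ∀ m, momentBound d 0 k m 0 ≤ (d : ℝ) ^ k / k.factorial := by
  induction k with
  | zero => intro m; simp [momentBound]
  | succ k ih =>
    intro m
    have key : (d * (m - 0 : ℕ) / (2 * m - 1) / (k + 1) : ℝ) ≤ d / (k + 1) := by
      rcases m with _ | m
      · simp; positivity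
      · gcongr
        have hm := m.cast_nonneg (α := ℝ)
        rw [div_le_iff₀ (by push_cast; linarith)]
        push_cast
        nlinarith [d.cast_nonneg (α := ℝ), mul_nonneg (d.cast_nonneg (α := ℝ)) hm]
    rw [momentBound]
    calc _ ≤ (d / (k + 1) : ℝ) * (d ^ k / k.factorial) :=
          mul_le_mul key (ih _) (momentBound_nonneg _ _ _ _ _) (by positivity)
      _ = _ := by
        rw [Nat.factorial_succ, pow_succ]; push_cast; field_simp

theorem tendsto_momentBound (d s k : ℕ) : ∀ r,
    Tendsto (fun m => momentBound d s k m r) atTop (𝓝 ((d / 2 : ℝ) ^ k / k.factorial)) := by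
  induction k with
  | zero => intro r; simp [momentBound]
  | succ k ih =>
    intro r
    have h1 : Tendsto (fun m : ℕ => (((m - r : ℕ) : ℝ) / (2 * m - 1))) atTop (𝓝 (1 / 2)) := by
      have h2 : Tendsto (fun m : ℕ => (1 - (r : ℝ) / m) / (2 - 1 / m)) atTop
          (𝓝 ((1 - 0) / (2 - 0))) :=
        (tendsto_const_nhds.sub (tendsto_const_div_atTop_nhds_zero_nat _)).div
          (tendsto_const_nhds.sub (tendsto_const_div_atTop_nhds_zero_nat _)) (by norm_num)
      rw [sub_zero, sub_zero] at h2
      refine h2.congr' ?_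
      filter_upwards [eventually_ge_atTop (r + 1)] with m hm
      have hm0 : (1 : ℝ) ≤ m := by exact_mod_cast (by omega : 1 ≤ m)
      rw [Nat.cast_sub (by omega)]
      have : (2 * m - 1 : ℝ) ≠ 0 := by linarith
      field_simp
    have h3 := ((h1.const_mul (d / (k + 1) : ℝ)).mul
      ((ih (r + s)).comp (tendsto_sub_atTop_nat 1)))
    convert h3 using 1
    · funext m
      simp only [momentBound, Function.comp]
      ring
    · congr 1
      rw [Nat.factorial_succ, pow_succ]; push_cast; field_simp

variable {V : Type} [Fintype V] [DecidableEq V] (H : SimpleGraph V) [DecidableRel H.Adj] {d : ℕ}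

theorem binomialMoment_le (hH : H.IsRegularOfDegree d) (k : ℕ) :
    ∀ (m : ℕ) (S : Finset V), #S = 2 * m →
      (binomialMoment H.edgeFinset k S : ℝ) ≤
        momentBound d 0 k m 0 * (∏ i ∈ range m, (2 * i + 1) : ℕ) := by
  induction k with
  | zero => intro m S hS; rw [binomialMoment_zero _ hS]; simp [momentBound]
  | succ k ih =>
    intro m S hS
    have h1 := card_edgesWithin_edgeFinset_le H hH hS
    have h2 := succ_mul_binomialMoment_succ H.edgeFinset k S
    rcases m with _ | m
    · have : edgesWithin H.edgeFinset S = ∅ := by simpa using h1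
      rw [this, sum_empty] at h2
      have h3 : binomialMoment H.edgeFinset (k + 1) S = 0 := by simpa using h2
      simp [h3, momentBound]
    have h3 : ∀ e ∈ edgesWithin H.edgeFinset S,
        (binomialMoment H.edgeFinset k {v ∈ S | v ∉ e} : ℝ) ≤
          momentBound d 0 k m 0 * (∏ i ∈ range m, (2 * i + 1) : ℕ) := by
      intro e he
      obtain ⟨-, hd, he⟩ := mem_edgesWithin.1 he
      have := card_filter_notMem_add_two hd he
      exact ih m _ (by omega)
    have h4 := sum_le_card_nsmul _ _ _ h3
    rw [nsmul_eq_mul, ← Nat.cast_sum, ← h2] at h4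
    have h5 : (#(edgesWithin H.edgeFinset S) : ℝ) ≤ d * (m + 1) := by exact_mod_cast h1
    have h6 := h4.trans (mul_le_mul_of_nonneg_right h5
      (mul_nonneg (momentBound_nonneg d 0 k m 0) (Nat.cast_nonneg _)))
    rw [prod_range_succ, momentBound]
    push_cast at h6 ⊢
    rw [← mul_le_mul_iff_right₀ (show (0 : ℝ) < k + 1 by positivity)]
    refine h6.trans_eq ?_
    have : (2 * (m + 1) - 1 : ℝ) = 2 * m + 1 := by ring
    rw [this]
    field_simp

theorem le_binomialMoment (hH : H.IsRegularOfDegree d) (k : ℕ) :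
    ∀ (m r : ℕ) (S : Finset V), #S = 2 * m → Fintype.card V = 2 * m + 2 * r →
      momentBound d 1 k m r * (∏ i ∈ range m, (2 * i + 1) : ℕ) ≤
        (binomialMoment H.edgeFinset k S : ℝ) := by
  induction k with
  | zero => intro m r S hS _; rw [binomialMoment_zero _ hS]; simp [momentBound]
  | succ k ih =>
    intro m r S hS hV
    have h1 := le_card_edgesWithin_edgeFinset H hH hS hV
    have h2 := succ_mul_binomialMoment_succ H.edgeFinset k S
    rcases m with _ | m
    · simp [momentBound]
    have h3 : ∀ e ∈ edgesWithin H.edgeFinset S,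
        momentBound d 1 k m (r + 1) * (∏ i ∈ range m, (2 * i + 1) : ℕ) ≤
          (binomialMoment H.edgeFinset k {v ∈ S | v ∉ e} : ℝ) := by
      intro e he
      obtain ⟨-, hd, he⟩ := mem_edgesWithin.1 he
      have := card_filter_notMem_add_two hd he
      exact ih m (r + 1) _ (by omega) (by omega)
    have h4 := card_nsmul_le_sum _ _ _ h3
    rw [nsmul_eq_mul, ← Nat.cast_sum, ← h2] at h4
    have h5 : (d * (m + 1 - r : ℕ) : ℝ) ≤ #(edgesWithin H.edgeFinset S) := by exact_mod_cast h1
    have h6 := (mul_le_mul_of_nonneg_right h5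
      (mul_nonneg (momentBound_nonneg d 1 k m (r + 1)) (Nat.cast_nonneg _))).trans h4
    rw [prod_range_succ, momentBound]
    push_cast at h6 ⊢
    rw [← mul_le_mul_iff_right₀ (show (0 : ℝ) < k + 1 by positivity)]
    refine Eq.trans_le ?_ h6
    have : (2 * (m + 1) - 1 : ℝ) = 2 * m + 1 := by ring
    rw [this]
    field_simp

end Bounds

section Count

open Finset

variable {V : Type} [Fintype V] [DecidableEq V]

theorem pmCount_eq (G : SimpleGraph V) [DecidableRel G.Adj] :
    pmCount G = #{M ∈ matchingsOn (univ : Finset V) | M ⊆ G.edgeFinset} := by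
  classical
  rw [pmCount, ← Set.ncard_coe_finset]
  refine Set.ncard_congr (fun M _ => M.edgeSet.toFinset) ?_ ?_ ?_
  · intro M hM
    have hsub : M.edgeSet ⊆ G.edgeSet := M.edgeSet_subset
    simp only [coe_filter, mem_matchingsOn, Set.mem_ofPred_eq, Set.mem_toFinset, mem_univ, if_true]
    refine ⟨⟨fun e he => G.not_isDiag_of_mem_edgeSet (hsub he), fun v => ?_⟩, fun e he => ?_⟩
    · obtain ⟨w, hw, huniq⟩ := Subgraph.isPerfectMatching_iff.1 hM v
      rw [card_eq_one]
      refine ⟨s(v, w), ?_⟩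
      ext e
      simp only [mem_filter, Set.mem_toFinset, mem_singleton]
      constructor
      · rintro ⟨he, ⟨u, rfl⟩⟩
        rw [huniq u (by simpa using he)]
      · rintro rfl
        exact ⟨by simpa using hw, by simp⟩
    · exact mem_edgeFinset.2 (hsub (by simpa using he))
  · intro M N hM hN h
    have h' : M.edgeSet = N.edgeSet := by simpa using h
    refine Subgraph.ext ?_ ?_
    · rw [hM.2.verts_eq_univ, hN.2.verts_eq_univ]
    · funext a b
      rw [← Subgraph.mem_edgeSet, ← Subgraph.mem_edgeSet, h']
  · intro M hM
    simp only [coe_filter, mem_matchingsOn, Set.mem_ofPred_eq, mem_univ, if_true] at hM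
    obtain ⟨⟨hd, hc⟩, hG⟩ := hM
    refine ⟨{ verts := Set.univ
              Adj := fun a b => s(a, b) ∈ M
              adj_sub := fun h => by simpa using hG h
              edge_vert := fun _ => Set.mem_univ _
              symm := ⟨fun a b h => by rwa [Sym2.eq_swap]⟩ }, ?_, ?_⟩
    · refine Subgraph.isPerfectMatching_iff.2 fun v => ?_
      obtain ⟨e, he⟩ := card_eq_one.1 (hc v)
      have hmem : e ∈ ({e ∈ M | v ∈ e} : Finset _) := by simp [he]
      obtain ⟨heM, w, rfl⟩ := mem_filter.1 hmem
      refine ⟨w, heM, fun u hu => ?_⟩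
      have : s(v, u) ∈ ({e ∈ M | v ∈ e} : Finset _) := mem_filter.2 ⟨hu, by simp⟩
      rw [he, mem_singleton] at this
      exact Sym2.congr_right.1 this
    · ext e
      induction e with | _ a b =>
      simp

theorem pmCount_top {n : ℕ} (hV : Fintype.card V = 2 * n) :
    pmCount (⊤ : SimpleGraph V) = ∏ i ∈ range n, (2 * i + 1) := by
  rw [pmCount_eq, filter_true_of_mem, card_matchingsOn n _ (by rw [card_univ, hV])]
  intro M hM e he
  have := (mem_matchingsOn.1 hM).1 e he
  simpa using this

/-- Inclusion-exclusion over the edges of the complement. -/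
theorem hasSum_pmCount (G : SimpleGraph V) [DecidableRel G.Adj] :
    HasSum (fun k => (-1 : ℝ) ^ k * binomialMoment Gᶜ.edgeFinset k (univ : Finset V))
      (pmCount G) := by
  have h1 : ∀ x : ℕ, HasSum (fun k => (-1 : ℝ) ^ k * (x.choose k : ℝ)) (if x = 0 then 1 else 0) := by
    intro x
    have h2 : (∑ k ∈ range (x + 1), (-1 : ℝ) ^ k * (x.choose k : ℝ)) = if x = 0 then 1 else 0 := by
      exact_mod_cast congrArg (Int.cast : ℤ → ℝ) (Int.alternating_sum_range_choose (n := x))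
    rw [← h2]
    refine hasSum_sum_of_ne_finset_zero fun k hk => ?_
    rw [Nat.choose_eq_zero_of_lt (by simpa using hk)]
    simp
  have h3 := hasSum_sum fun (M : Finset (Sym2 V)) (_ : M ∈ matchingsOn (univ : Finset V)) =>
    h1 #(M ∩ Gᶜ.edgeFinset)
  convert h3 using 1
  · funext k
    simp [binomialMoment, mul_sum]
  · rw [pmCount_eq, sum_boole]
    congr 2
    refine filter_congr fun M hM => ?_
    rw [card_eq_zero, ← disjoint_iff_inter_eq_empty, Finset.disjoint_left]
    refine forall₂_congr fun e he => ?_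
    have hd := (mem_matchingsOn.1 hM).1 e he
    induction e with | _ a b =>
    have : a ≠ b := by simpa using hd
    simp [this]

end Count

/-- For a fixed nonnegative integer `d` and a sequence `G n` of `(2n-d-1)`-regular
graphs on `2n` vertices, `pm(G n) / pm(K_{2n}) → e^{-d/2}` as `n → ∞`. -/
theorem stmt_18 (d : ℕ) (G : ∀ n : ℕ, SimpleGraph (Fin (2 * n)))
    [∀ n, DecidableRel (G n).Adj]
    (hreg : ∀ n, (G n).IsRegularOfDegree (2 * n - d - 1)) :
    Tendsto
      (fun n : ℕ =>
        (pmCount (G n) : ℝ) / (pmCount (⊤ : SimpleGraph (Fin (2 * n))) : ℝ))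
      atTop (𝓝 (Real.exp (-(d : ℝ) / 2))) := by
  set c : ℕ → ℕ := fun n => ∏ i ∈ Finset.range n, (2 * i + 1) with hc
  have hcpos : ∀ n, (0 : ℝ) < c n := fun n => by
    exact_mod_cast Finset.prod_pos fun i _ => Nat.succ_pos _
  set W : ℕ → ℕ → ℝ := fun n k =>
    (binomialMoment (G n)ᶜ.edgeFinset k Finset.univ : ℝ) / c n with hW
  have hratio : ∀ n, (pmCount (G n) : ℝ) / (pmCount (⊤ : SimpleGraph (Fin (2 * n))) : ℝ) =
      ∑' k, (-1 : ℝ) ^ k * W n k := by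
    intro n
    rw [pmCount_top (n := n) (by simp), ← ((hasSum_pmCount (G n)).div_const _).tsum_eq]
    simp only [hW, hc, mul_div_assoc]
  have hcompl : ∀ n, d + 1 ≤ 2 * n → (G n)ᶜ.IsRegularOfDegree d := by
    intro n hn
    have := (hreg n).compl
    rw [Fintype.card_fin] at this
    convert this using 1
    omega
  have hup : ∀ n, d + 1 ≤ 2 * n → ∀ k, W n k ≤ momentBound d 0 k n 0 := fun n hn k =>
    (div_le_iff₀ (hcpos n)).2 (binomialMoment_le _ (hcompl n hn) k n _ (by simp))
  have hlow : ∀ n, d + 1 ≤ 2 * n → ∀ k, momentBound d 1 k n 0 ≤ W n k := fun n hn k =>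
    (le_div_iff₀ (hcpos n)).2 (le_binomialMoment _ (hcompl n hn) k n 0 _ (by simp) (by simp))
  have hev : ∀ᶠ n : ℕ in atTop, d + 1 ≤ 2 * n := by
    filter_upwards [eventually_ge_atTop (d + 1)] with n hn
    omega
  have hlim : ∀ k, Tendsto (fun n => W n k) atTop (𝓝 ((d / 2 : ℝ) ^ k / k.factorial)) := fun k =>
    tendsto_of_tendsto_of_tendsto_of_le_of_le' (tendsto_momentBound d 1 k 0)
      (tendsto_momentBound d 0 k 0) (hev.mono fun n hn => hlow n hn k)
      (hev.mono fun n hn => hup n hn k)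
  have hexp : Real.exp (-(d : ℝ) / 2) = ∑' k : ℕ, (-1 : ℝ) ^ k * ((d / 2 : ℝ) ^ k / k.factorial) := by
    rw [Real.exp_eq_exp_ℝ, NormedSpace.exp_eq_tsum_div]
    refine tsum_congr fun k => ?_
    rw [← mul_div_assoc, ← mul_pow]
    ring
  rw [hexp]
  simp only [hratio]
  refine tendsto_tsum_of_dominated_convergence (Real.summable_pow_div_factorial (d : ℝ))
    (fun k => (hlim k).const_mul _) ?_
  filter_upwards [hev] with n hn k
  rw [norm_mul, norm_pow, norm_neg, norm_one, one_pow, one_mul, Real.norm_eq_abs,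
    abs_of_nonneg (div_nonneg (Nat.cast_nonneg _) (hcpos n).le)]
  exact (hup n hn k).trans (momentBound_le d k n)
end
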